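/- Up to the S₃-action on 4Δ₂, there are exactly 8 regular unimodular triangulations 𝒯 of 4Δ₂ with the property that no smooth tropical quartic curve dual to 𝒯 satisfies genericity condition (i); these are exactly the unimodular refinements of a single common partial subdivision of 4Δ₂. -/

import Mathlib

noncomputable section

open Finset

/-- The 15 lattice points of the dilated simplex `4Δ₂ = {(x₁,x₂) ∈ ℤ²_{≥0} : x₁+x₂ ≤ 4}`. -/
def latticePts : Finset (ℤ × ℤ) :=
  (Finset.Icc (0 : ℤ) 4 ×ˢ Finset.Icc (0 : ℤ) 4).filter fun p => p.1 + p.2 ≤ 4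

/-- The value at `w ∈ ℝ²` of the tropical monomial with exponent `p` and coefficient `lam p`:
`lam p + p₁·w₁ + p₂·w₂`. -/
def mval (lam : ℤ × ℤ → ℝ) (p : ℤ × ℤ) (w : ℝ × ℝ) : ℝ :=
  lam p + (p.1 : ℝ) * w.1 + (p.2 : ℝ) * w.2

/-- The tropical quartic curve with coefficient vector `lam`: the corner locus of
`max_{(i,j) ∈ 4Δ₂} (lam_{ij} + i·x + j·y)`. -/
def tropCurve (lam : ℤ × ℤ → ℝ) : Set (ℝ × ℝ) :=
  {w | ∃ p ∈ latticePts, ∃ q ∈ latticePts, p ≠ q ∧ mval lam p w = mval lam q w ∧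
        ∀ r ∈ latticePts, mval lam r w ≤ mval lam p w}

/-- `σ` is exactly the set of lattice points of `4Δ₂` where the maximum defining the tropical
polynomial is attained at the point `w`. -/
def IsArgmax (lam : ℤ × ℤ → ℝ) (w : ℝ × ℝ) (σ : Finset (ℤ × ℤ)) : Prop :=
  ∀ p : ℤ × ℤ, p ∈ σ ↔ p ∈ latticePts ∧ ∀ q ∈ latticePts, mval lam q w ≤ mval lam p w

/-- `T` is the set of maximal (2-dimensional) cells of the regular subdivision of `4Δ₂`
induced by the coefficient vector `lam`; equivalently, `lam` lies in the (relatively open)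
secondary cone `Σ(T)`. -/
def Induces (lam : ℤ × ℤ → ℝ) (T : Finset (Finset (ℤ × ℤ))) : Prop :=
  ∀ σ : Finset (ℤ × ℤ), σ ∈ T ↔ 3 ≤ σ.card ∧ ∃ w : ℝ × ℝ, IsArgmax lam w σ

/-- Embedding of lattice points into `ℝ²`. -/
def toR (p : ℤ × ℤ) : ℝ × ℝ := ((p.1 : ℝ), (p.2 : ℝ))

/-- Convex hull in `ℝ²` of a finite set of lattice points. -/
def rhull (σ : Finset (ℤ × ℤ)) : Set (ℝ × ℝ) := convexHull ℝ (toR '' ↑σ)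

/-- A triangle with vertices `a, b, c` of normalized area 1 (Euclidean area ½). -/
def IsUnimodularTriangle (σ : Finset (ℤ × ℤ)) : Prop :=
  ∃ a b c : ℤ × ℤ, σ = {a, b, c} ∧
    ((b.1 - a.1) * (c.2 - a.2) - (b.2 - a.2) * (c.1 - a.1)).natAbs = 1

/-- `T` is a unimodular triangulation of `4Δ₂`: its cells are unimodular triangles with
vertices among the lattice points, they cover `4Δ₂`, and they intersect face-to-face. -/
def IsUnimodularTriangulation (T : Finset (Finset (ℤ × ℤ))) : Prop :=
  (∀ σ ∈ T, σ ⊆ latticePts ∧ IsUnimodularTriangle σ) ∧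
  (⋃ σ ∈ T, rhull σ) = rhull latticePts ∧
  ∀ σ ∈ T, ∀ τ ∈ T, rhull σ ∩ rhull τ = rhull (σ ∩ τ)

/-- A regular (= induced by some coefficient vector) unimodular triangulation of `4Δ₂`. -/
def IsRegularUnimodularTriangulation (T : Finset (Finset (ℤ × ℤ))) : Prop :=
  IsUnimodularTriangulation T ∧ ∃ lam, Induces lam T

/-- A coefficient vector defines a smooth tropical quartic iff its induced regular subdivision
is a unimodular triangulation of `4Δ₂`. -/
def IsSmoothTropicalQuartic (lam : ℤ × ℤ → ℝ) : Prop :=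
  ∃ T, Induces lam T ∧ IsUnimodularTriangulation T

/-- A sign distribution on the lattice points of `4Δ₂`. -/
def IsSignDist (δ : ℤ × ℤ → ℤ) : Prop := ∀ p ∈ latticePts, δ p = 1 ∨ δ p = -1

/-- `p + e₁`. -/
def pE1 (p : ℤ × ℤ) : ℤ × ℤ := (p.1 + 1, p.2)
/-- `p + e₂`. -/
def pE2 (p : ℤ × ℤ) : ℤ × ℤ := (p.1, p.2 + 1)

/-- The "downward" unimodular triangle `{p, p+e₁, p+e₂}`; its dual vertex on the tropical
curve has adjacent edges in directions `-e₁`, `-e₂` and `e₁+e₂`. -/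
def downTri (p : ℤ × ℤ) : Finset (ℤ × ℤ) := {p, pE1 p, pE2 p}

/-- The vertex of the tropical curve dual to the triangle `downTri p`. -/
def dvtx (lam : ℤ × ℤ → ℝ) (p : ℤ × ℤ) : ℝ × ℝ :=
  (lam p - lam (pE1 p), lam p - lam (pE2 p))

/-- `w` lies on the edge of the tropical curve dual to the edge `{a, b}` of the dual
subdivision: the maximum is attained at both `a` and `b`. -/
def OnDualEdge (lam : ℤ × ℤ → ℝ) (a b : ℤ × ℤ) (w : ℝ × ℝ) : Prop :=
  mval lam a w = mval lam b w ∧ ∀ r ∈ latticePts, mval lam r w ≤ mval lam a w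

/-- Parameters `t ≥ 0` such that `dvtx - t·e₁` still lies on the edge (in direction `-e₁`)
emanating from the vertex dual to `downTri p`. -/
def edgeSet1 (lam : ℤ × ℤ → ℝ) (p : ℤ × ℤ) : Set ℝ :=
  {t | 0 ≤ t ∧ OnDualEdge lam p (pE2 p) ((dvtx lam p).1 - t, (dvtx lam p).2)}

/-- As `edgeSet1`, for the edge in direction `-e₂`. -/
def edgeSet2 (lam : ℤ × ℤ → ℝ) (p : ℤ × ℤ) : Set ℝ :=
  {t | 0 ≤ t ∧ OnDualEdge lam p (pE1 p) ((dvtx lam p).1, (dvtx lam p).2 - t)}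

/-- As `edgeSet1`, for the edge in direction `e₁+e₂`. -/
def edgeSet3 (lam : ℤ × ℤ → ℝ) (p : ℤ × ℤ) : Set ℝ :=
  {t | 0 ≤ t ∧ OnDualEdge lam (pE1 p) (pE2 p) ((dvtx lam p).1 + t, (dvtx lam p).2 + t)}

/-- Lattice length `μ₁` of the edge in direction `-e₁` at the vertex dual to `downTri p`. -/
def mu1 (lam : ℤ × ℤ → ℝ) (p : ℤ × ℤ) : ℝ := sSup (edgeSet1 lam p)
/-- Lattice length `μ₂` of the edge in direction `-e₂` at the vertex dual to `downTri p`. -/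
def mu2 (lam : ℤ × ℤ → ℝ) (p : ℤ × ℤ) : ℝ := sSup (edgeSet2 lam p)
/-- Lattice length `μ₃` of the edge in direction `e₁+e₂` at the vertex dual to `downTri p`. -/
def mu3 (lam : ℤ × ℤ → ℝ) (p : ℤ × ℤ) : ℝ := sSup (edgeSet3 lam p)

/-- The tropical curve of `lam` has a vertex dual to `downTri p` which is adjacent to three
*bounded* edges in directions `-e₁`, `-e₂` and `e₁+e₂` (the configuration of genericity
condition (i); for a smooth quartic such a vertex is the vertex of a tropical bitangent
line whose bitangent class has shape (C)). -/
def HasCVertexAt (lam : ℤ × ℤ → ℝ) (p : ℤ × ℤ) : Prop :=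
  (∃ w, IsArgmax lam w (downTri p)) ∧
  BddAbove (edgeSet1 lam p) ∧ BddAbove (edgeSet2 lam p) ∧ BddAbove (edgeSet3 lam p)

/-- Among the three reals, there is a unique smallest one. -/
def UniqueShortest (a b c : ℝ) : Prop :=
  (a < b ∧ a < c) ∨ (b < a ∧ b < c) ∨ (c < a ∧ c < b)

/-- Genericity condition (i) of Cueto–Markwig: whenever the curve contains a vertex adjacent
to three bounded edges with directions `-e₁`, `-e₂` and `e₁+e₂`, the shortest of these three
edges is unique. -/
def SatisfiesGenericityI (lam : ℤ × ℤ → ℝ) : Prop :=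
  ∀ p : ℤ × ℤ, HasCVertexAt lam p → UniqueShortest (mu1 lam p) (mu2 lam p) (mu3 lam p)

/-- The smooth tropical quartic `Γ_lam` has a bitangent class of shape (C): the central
triangle `{(1,1),(2,1),(1,2)}` is a cell of the dual subdivision and the three edges of the
curve at its dual vertex (which have directions `-e₁`, `-e₂`, `e₁+e₂`) are bounded; the
bitangent class of shape (C) consists exactly of this vertex. -/
def HasShapeC (lam : ℤ × ℤ → ℝ) : Prop := HasCVertexAt lam (1, 1)

/-- A generic (regular unimodular) triangulation: some smooth tropical quartic dual to it
satisfies genericity condition (i). -/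
def GenericTriangulation (T : Finset (Finset (ℤ × ℤ))) : Prop :=
  IsRegularUnimodularTriangulation T ∧ ∃ lam, Induces lam T ∧ SatisfiesGenericityI lam

/-- A non-generic (regular unimodular) triangulation: every smooth tropical quartic dual to
it fails genericity condition (i). -/
def NonGenericTriangulation (T : Finset (Finset (ℤ × ℤ))) : Prop :=
  IsRegularUnimodularTriangulation T ∧ ∀ lam, Induces lam T → ¬ SatisfiesGenericityI lam

/-- The sign conditions (C) of Cueto–Markwig (Table 11, Corollary 7.3) for the bitangent
class of shape (C) with motif indices `i, j, k`. -/
def SignConditionC (δ : ℤ × ℤ → ℤ) (i j k : ℕ) : Prop :=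
  0 < (-δ (1, 1)) ^ (i + j) * (δ (1, 2)) ^ i * (δ (2, 1)) ^ j *
        δ (0, (i : ℤ)) * δ ((j : ℤ), 0) ∧
  0 < (-δ (2, 1)) ^ (k + j) * (δ (1, 2)) ^ k * (δ (1, 1)) ^ j *
        δ ((k : ℤ), 4 - (k : ℤ)) * δ ((j : ℤ), 0)

/-- Barycentric coordinates `(p₁, p₂, 4 - p₁ - p₂)` of a lattice point of `4Δ₂`. -/
def bar3 (p : ℤ × ℤ) : Fin 3 → ℤ := ![p.1, p.2, 4 - p.1 - p.2]

/-- The action of `S₃` on the lattice points of `4Δ₂` by permuting the barycentric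
coordinates (generated by the reflections along the medians of the triangle). -/
def actPt (π : Equiv.Perm (Fin 3)) (p : ℤ × ℤ) : ℤ × ℤ := (bar3 p (π⁻¹ 0), bar3 p (π⁻¹ 1))

/-- The induced `S₃`-action on triangulations of `4Δ₂`. -/
def actTri (π : Equiv.Perm (Fin 3)) (T : Finset (Finset (ℤ × ℤ))) : Finset (Finset (ℤ × ℤ)) :=
  T.image fun σ => σ.image (actPt π)

/-- Two triangulations are equivalent under the `S₃`-action. -/
def S3Equiv (T T' : Finset (Finset (ℤ × ℤ))) : Prop := ∃ π : Equiv.Perm (Fin 3), actTri π T = T'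


/-- A partial subdivision of `4Δ₂`: a finite collection of nonempty sets of lattice points
of `4Δ₂` whose convex hulls intersect face-to-face (it need not cover all of `4Δ₂`). -/
def IsPartialSubdivision (S : Finset (Finset (ℤ × ℤ))) : Prop :=
  (∀ c ∈ S, c ⊆ latticePts ∧ (c : Set (ℤ × ℤ)).Nonempty) ∧
  ∀ c ∈ S, ∀ c' ∈ S, rhull c ∩ rhull c' = rhull (c ∩ c')

/-- A triangulation `T` refines a partial subdivision `S`: every cell of `S` is the union
of the cells of `T` contained in it. -/
def Refines (T S : Finset (Finset (ℤ × ℤ))) : Prop :=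
  ∀ c ∈ S, rhull c = ⋃ σ ∈ T, ⋃ (_ : rhull σ ⊆ rhull c), rhull σ


/-! ## Basic integer geometry -/

def ori (a b c : ℤ × ℤ) : ℤ := (b.1 - a.1) * (c.2 - a.2) - (b.2 - a.2) * (c.1 - a.1)

abbrev Tri := (ℤ × ℤ) × (ℤ × ℤ) × (ℤ × ℤ)

def triS (t : Tri) : Finset (ℤ × ℤ) := {t.1, t.2.1, t.2.2}

/-- affine interpolation of `lam` on the triangle `t` -/
def ell (lam : ℤ × ℤ → ℝ) (t : Tri) (p : ℤ × ℤ) : ℝ :=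
  lam t.1 * (ori t.2.1 t.2.2 p : ℤ) + lam t.2.1 * (ori t.2.2 t.1 p : ℤ) +
    lam t.2.2 * (ori t.1 t.2.1 p : ℤ)

def triO (t : Tri) : ℤ := ori t.1 t.2.1 t.2.2

def Strict (lam : ℤ × ℤ → ℝ) (t : Tri) : Prop :=
  ∀ p ∈ latticePts, p ∉ triS t → lam p < ell lam t p

lemma ell_add (lam g : ℤ × ℤ → ℝ) (s : ℝ) (t : Tri) (p : ℤ × ℤ) :
    ell (fun q => lam q + s * g q) t p = ell lam t p + s * ell g t p := by
  unfold ell; ring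

lemma triO_real {a b c : ℤ × ℤ} (h : triO (a, b, c) = 1) :
    ((b.1 : ℝ) - a.1) * (c.2 - a.2) - (b.2 - a.2) * (c.1 - a.1) = 1 := by
  have : ((triO (a, b, c) : ℤ) : ℝ) = 1 := by rw [h]; norm_num
  simpa [triO, ori] using this

lemma ell_mval (lam : ℤ × ℤ → ℝ) (t : Tri) (h : triO t = 1) (p : ℤ × ℤ) (w : ℝ × ℝ) :
    ell lam t p - lam p = ell (fun q => mval lam q w) t p - mval lam p w := by
  obtain ⟨a, b, c⟩ := t
  have h1 := triO_real h
  simp only [ell, mval, ori]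
  push_cast
  linear_combination (-(p.1 * w.1 + p.2 * w.2 : ℝ)) * h1

lemma ell_const (M : ℝ) (f : ℤ × ℤ → ℝ) (t : Tri) (h : triO t = 1) (p : ℤ × ℤ)
    (ha : f t.1 = M) (hb : f t.2.1 = M) (hc : f t.2.2 = M) : ell f t p = M := by
  obtain ⟨a, b, c⟩ := t
  have h1 := triO_real h
  simp only [ell, ori] at *
  rw [ha, hb, hc]
  push_cast
  linear_combination M * h1

lemma strict_of_argmax {lam : ℤ × ℤ → ℝ} {w : ℝ × ℝ} {t : Tri} (h : triO t = 1)
    (hw : IsArgmax lam w (triS t)) : Strict lam t := by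
  intro p hp hpt
  have ha := (hw t.1).1 (by simp [triS])
  have hb := (hw t.2.1).1 (by simp [triS])
  have hc := (hw t.2.2).1 (by simp [triS])
  have e1 := le_antisymm (ha.2 _ hb.1) (hb.2 _ ha.1)
  have e2 := le_antisymm (ha.2 _ hc.1) (hc.2 _ ha.1)
  have h1 := ell_mval lam t h p w
  rw [ell_const (mval lam t.1 w) (fun q => mval lam q w) t h p rfl e1 e2] at h1
  have h2 : mval lam p w < mval lam t.1 w := by
    by_contra hcon
    push Not at hcon
    exact hpt ((hw p).2 ⟨hp, fun q hq => (ha.2 q hq).trans hcon⟩)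
  linarith

lemma ell_vert (lam : ℤ × ℤ → ℝ) (t : Tri) (h : triO t = 1) (p : ℤ × ℤ) (hp : p ∈ triS t) :
    ell lam t p = lam p := by
  obtain ⟨a, b, c⟩ := t
  have h1 := triO_real h
  simp only [triS, Finset.mem_insert, Finset.mem_singleton] at hp
  rcases hp with rfl | rfl | rfl <;> simp only [ell, ori] <;> push_cast
  · linear_combination (lam p) * h1
  · linear_combination (lam p) * h1
  · linear_combination (lam p) * h1

lemma argmax_of_strict {lam : ℤ × ℤ → ℝ} {t : Tri} (h : triO t = 1)
    (hs : triS t ⊆ latticePts) (hS : Strict lam t) : ∃ w, IsArgmax lam w (triS t) := by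
  obtain ⟨a, b, c⟩ := t
  have h1 := triO_real h
  let w : ℝ × ℝ :=
    (-(lam a * (b.2 - c.2) + lam b * (c.2 - a.2) + lam c * (a.2 - b.2)),
      -(lam a * (c.1 - b.1) + lam b * (a.1 - c.1) + lam c * (b.1 - a.1)))
  have key : ∀ p, mval lam p w = mval lam a w - (ell lam (a, b, c) p - lam p) := by
    intro p
    simp only [ell, mval, ori, w]
    push_cast
    linear_combination (lam a) * h1
  refine ⟨w, fun p => ⟨fun hp => ⟨hs hp, fun q hq => ?_⟩, fun hp => ?_⟩⟩
  · rw [key q, key p, ell_vert lam _ h p hp]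
    by_cases hqt : q ∈ triS (a, b, c)
    · rw [ell_vert lam _ h q hqt]; linarith
    · have := hS q hq hqt; linarith
  · by_contra hpt
    have h2 := hS p hp.1 hpt
    have h3 := hp.2 a (hs (by simp [triS]))
    rw [key p] at h3
    linarith

/-! ## Convex hulls -/

lemma mem_rhull {σ : Finset (ℤ × ℤ)} {x : ℝ × ℝ} : x ∈ rhull σ ↔
    ∃ c : ℤ × ℤ → ℝ, (∀ p ∈ σ, 0 ≤ c p) ∧ ∑ p ∈ σ, c p = 1 ∧
      ∑ p ∈ σ, c p * (p.1 : ℝ) = x.1 ∧ ∑ p ∈ σ, c p * (p.2 : ℝ) = x.2 := by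
  constructor
  · intro hx
    let A : Set (ℝ × ℝ) := {x | ∃ c : ℤ × ℤ → ℝ, (∀ p ∈ σ, 0 ≤ c p) ∧ ∑ p ∈ σ, c p = 1 ∧
      ∑ p ∈ σ, c p * (p.1 : ℝ) = x.1 ∧ ∑ p ∈ σ, c p * (p.2 : ℝ) = x.2}
    have hA : Convex ℝ A := by
      rintro x ⟨c, h0, h1, h2, h3⟩ y ⟨d, k0, k1, k2, k3⟩ a b ha hb hab
      refine ⟨fun p => a * c p + b * d p, fun p hp => ?_, ?_, ?_, ?_⟩
      · have := h0 p hp; have := k0 p hp; positivity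
      · rw [Finset.sum_add_distrib, ← Finset.mul_sum, ← Finset.mul_sum, h1, k1]; linarith
      · simp only [add_mul, mul_assoc]
        rw [Finset.sum_add_distrib, ← Finset.mul_sum, ← Finset.mul_sum, h2, k2]; simp
      · simp only [add_mul, mul_assoc]
        rw [Finset.sum_add_distrib, ← Finset.mul_sum, ← Finset.mul_sum, h3, k3]; simp
    refine convexHull_min ?_ hA hx
    rintro _ ⟨p, hp, rfl⟩
    refine ⟨fun q => if q = p then 1 else 0, fun q _ => by dsimp only; split_ifs <;> norm_num, ?_, ?_, ?_⟩ <;>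
      simp_all [toR]
  · rintro ⟨c, h0, h1, h2, h3⟩
    have : x = ∑ p ∈ σ, c p • toR p := by
      ext
      · simp [Prod.fst_sum, toR, h2]
      · simp [Prod.snd_sum, toR, h3]
    rw [this]
    exact (convex_convexHull ℝ _).sum_mem h0 h1
      (fun p hp => subset_convexHull ℝ _ ⟨p, hp, rfl⟩)

lemma rhull_mono {σ τ : Finset (ℤ × ℤ)} (h : σ ⊆ τ) : rhull σ ⊆ rhull τ :=
  convexHull_mono (Set.image_mono (by exact_mod_cast h))

lemma sum_mval (lam : ℤ × ℤ → ℝ) (w : ℝ × ℝ) (σ : Finset (ℤ × ℤ)) (c : ℤ × ℤ → ℝ) :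
    ∑ p ∈ σ, c p * mval lam p w = ∑ p ∈ σ, c p * lam p +
      (∑ p ∈ σ, c p * (p.1 : ℝ)) * w.1 + (∑ p ∈ σ, c p * (p.2 : ℝ)) * w.2 := by
  rw [Finset.sum_mul, Finset.sum_mul, ← Finset.sum_add_distrib, ← Finset.sum_add_distrib]
  refine Finset.sum_congr rfl fun p _ => ?_
  unfold mval; ring

lemma support_lemma {lam : ℤ × ℤ → ℝ} {w w' : ℝ × ℝ} {σ τ : Finset (ℤ × ℤ)}
    (hσ : IsArgmax lam w σ) (hτ : IsArgmax lam w' τ) {x : ℝ × ℝ} {c : ℤ × ℤ → ℝ}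
    (h0 : ∀ p ∈ σ, 0 ≤ c p) (h1 : ∑ p ∈ σ, c p = 1)
    (h2 : ∑ p ∈ σ, c p * (p.1 : ℝ) = x.1) (h3 : ∑ p ∈ σ, c p * (p.2 : ℝ) = x.2)
    (hx : x ∈ rhull τ) : ∀ p ∈ σ, c p ≠ 0 → p ∈ τ := by
  obtain ⟨d, k0, k1, k2, k3⟩ := mem_rhull.1 hx
  have hσne : σ.Nonempty := by
    rw [Finset.nonempty_iff_ne_empty]; rintro rfl; simp at h1
  have hτne : τ.Nonempty := by
    rw [Finset.nonempty_iff_ne_empty]; rintro rfl; simp at k1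
  obtain ⟨a, ha⟩ := hσne
  obtain ⟨b, hb⟩ := hτne
  have ha' := (hσ a).1 ha
  have hb' := (hτ b).1 hb
  -- σ side at w
  have e1 : ∑ p ∈ σ, c p * mval lam p w = mval lam a w := by
    rw [← one_mul (mval lam a w), ← h1, Finset.sum_mul]
    refine Finset.sum_congr rfl fun p hp => ?_
    rw [le_antisymm (ha'.2 p ((hσ p).1 hp).1) (((hσ p).1 hp).2 a ha'.1)]
  have e2 : ∑ p ∈ τ, d p * mval lam p w' = mval lam b w' := by
    rw [← one_mul (mval lam b w'), ← k1, Finset.sum_mul]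
    refine Finset.sum_congr rfl fun p hp => ?_
    rw [le_antisymm (hb'.2 p ((hτ p).1 hp).1) (((hτ p).1 hp).2 b hb'.1)]
  have e3 : ∑ p ∈ τ, d p * mval lam p w ≤ mval lam a w := by
    rw [← one_mul (mval lam a w), ← k1, Finset.sum_mul]
    refine Finset.sum_le_sum fun p hp => ?_
    exact mul_le_mul_of_nonneg_left (ha'.2 p ((hτ p).1 hp).1) (k0 p hp)
  rw [sum_mval, h2, h3] at e1
  rw [sum_mval, k2, k3] at e2 e3
  have e4 : ∑ p ∈ σ, c p * (mval lam b w' - mval lam p w') ≤ 0 := by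
    simp only [mul_sub]
    rw [Finset.sum_sub_distrib, sum_mval, h2, h3, ← Finset.sum_mul, h1]
    linarith
  have e5 : ∀ p ∈ σ, 0 ≤ c p * (mval lam b w' - mval lam p w') := fun p hp =>
    mul_nonneg (h0 p hp) (sub_nonneg.2 (hb'.2 p ((hσ p).1 hp).1))
  have e6 := (Finset.sum_eq_zero_iff_of_nonneg e5).1 (le_antisymm e4 (Finset.sum_nonneg e5))
  intro p hp hcp
  have e7 := (mul_eq_zero.1 (e6 p hp)).resolve_left hcp
  exact (hτ p).2 ⟨((hσ p).1 hp).1, fun q hq => by linarith [hb'.2 q hq]⟩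

lemma face_to_face {lam : ℤ × ℤ → ℝ} {w w' : ℝ × ℝ} {σ τ : Finset (ℤ × ℤ)}
    (hσ : IsArgmax lam w σ) (hτ : IsArgmax lam w' τ) :
    rhull σ ∩ rhull τ = rhull (σ ∩ τ) := by
  apply Set.Subset.antisymm
  · rintro x ⟨hx, hy⟩
    obtain ⟨c, h0, h1, h2, h3⟩ := mem_rhull.1 hx
    have key := support_lemma hσ hτ h0 h1 h2 h3 hy
    have hsum : ∀ f : ℤ × ℤ → ℝ, ∑ p ∈ σ ∩ τ, c p * f p = ∑ p ∈ σ, c p * f p := by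
      intro f
      refine Finset.sum_subset Finset.inter_subset_left fun p hp hnp => ?_
      by_cases hc : c p = 0
      · simp [hc]
      · exact absurd (Finset.mem_inter.2 ⟨hp, key p hp hc⟩) hnp
    refine mem_rhull.2 ⟨c, fun p hp => h0 p (Finset.mem_inter.1 hp).1, ?_, ?_, ?_⟩
    · simpa using (hsum fun _ => 1).trans (by simpa using h1)
    · rw [hsum, h2]
    · rw [hsum, h3]
  · exact Set.subset_inter (rhull_mono Finset.inter_subset_left)
      (rhull_mono Finset.inter_subset_right)

lemma induces_of_argmax {lam : ℤ × ℤ → ℝ} {T : Finset (Finset (ℤ × ℤ))}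
    (hU : (⋃ σ ∈ T, rhull σ) = rhull latticePts) (hc : ∀ σ ∈ T, σ.card = 3)
    (h : ∀ σ ∈ T, ∃ w, IsArgmax lam w σ) : Induces lam T := by
  intro σ
  constructor
  · intro hσ; exact ⟨(hc σ hσ).ge, h σ hσ⟩
  · rintro ⟨h3, w, hw⟩
    have hpos : (0 : ℝ) < σ.card := by exact_mod_cast (by omega : 0 < σ.card)
    let c : ℤ × ℤ → ℝ := fun _ => (σ.card : ℝ)⁻¹
    let x : ℝ × ℝ := (∑ p ∈ σ, c p * (p.1 : ℝ), ∑ p ∈ σ, c p * (p.2 : ℝ))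
    have h1 : ∑ p ∈ σ, c p = 1 := by simp [c]; field_simp
    have h0 : ∀ p ∈ σ, 0 ≤ c p := fun p _ => by positivity
    have hx : x ∈ rhull σ := mem_rhull.2 ⟨c, h0, h1, rfl, rfl⟩
    have hx' : x ∈ rhull latticePts := rhull_mono (fun p hp => ((hw p).1 hp).1) hx
    rw [← hU] at hx'
    simp only [Set.mem_iUnion] at hx'
    obtain ⟨τ, hτ, hxτ⟩ := hx'
    obtain ⟨w', hw'⟩ := h τ hτ
    have := support_lemma hw hw' h0 h1 rfl rfl hxτ
    have hsub : σ ⊆ τ := fun p hp => this p hp (by positivity)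
    have : σ = τ := Finset.eq_of_subset_of_card_le hsub (by rw [hc τ hτ]; exact h3)
    rwa [this]

/-! ## The list of unimodular lattice triangles -/

def pts : List (ℤ × ℤ) :=
  [(0, 0), (0, 1), (0, 2), (0, 3), (0, 4), (1, 0), (1, 1), (1, 2), (1, 3), (2, 0), (2, 1), (2, 2),
    (3, 0), (3, 1), (4, 0)]

def key (p : ℤ × ℤ) : ℤ := 5 * p.1 + p.2

def LstG : List Tri :=
  pts.flatMap fun a => pts.flatMap fun b =>
    bif decide (key a < key b) then
      (pts.filter fun c => decide (key a < key c) && decide (ori a b c = 1)).map fun c => (a, b, c)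
    else []

def Lst : List Tri :=
  [((0, 0), (1, 0), (0, 1)), ((0, 0), (1, 0), (1, 1)), ((0, 0), (1, 0), (2, 1)),
   ((0, 0), (1, 0), (3, 1)), ((0, 0), (1, 1), (0, 1)), ((0, 0), (1, 1), (1, 2)),
   ((0, 0), (1, 2), (0, 1)), ((0, 0), (1, 2), (1, 3)), ((0, 0), (1, 3), (0, 1)),
   ((0, 0), (2, 1), (1, 1)), ((0, 0), (3, 1), (2, 1)), ((0, 1), (1, 0), (0, 2)),
   ((0, 1), (1, 0), (1, 1)), ((0, 1), (1, 0), (2, 0)), ((0, 1), (1, 1), (0, 2)),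
   ((0, 1), (1, 1), (1, 2)), ((0, 1), (1, 1), (2, 2)), ((0, 1), (1, 2), (0, 2)),
   ((0, 1), (1, 2), (1, 3)), ((0, 1), (1, 3), (0, 2)), ((0, 1), (2, 0), (1, 1)),
   ((0, 1), (2, 0), (3, 0)), ((0, 1), (2, 2), (1, 2)), ((0, 1), (3, 0), (1, 1)),
   ((0, 1), (3, 0), (4, 0)), ((0, 1), (4, 0), (1, 1)), ((0, 2), (1, 0), (0, 3)),
   ((0, 2), (1, 0), (1, 1)), ((0, 2), (1, 1), (0, 3)), ((0, 2), (1, 1), (1, 2)),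
   ((0, 2), (1, 1), (2, 1)), ((0, 2), (1, 1), (3, 0)), ((0, 2), (1, 2), (0, 3)),
   ((0, 2), (1, 2), (1, 3)), ((0, 2), (1, 3), (0, 3)), ((0, 2), (2, 1), (1, 2)),
   ((0, 2), (2, 1), (3, 1)), ((0, 2), (3, 0), (2, 1)), ((0, 2), (3, 1), (1, 2)),
   ((0, 3), (1, 0), (0, 4)), ((0, 3), (1, 0), (1, 1)), ((0, 3), (1, 1), (0, 4)),
   ((0, 3), (1, 1), (1, 2)), ((0, 3), (1, 1), (2, 0)), ((0, 3), (1, 2), (0, 4)),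
   ((0, 3), (1, 2), (1, 3)), ((0, 3), (1, 2), (2, 2)), ((0, 3), (1, 2), (3, 1)),
   ((0, 3), (1, 2), (4, 0)), ((0, 3), (1, 3), (0, 4)), ((0, 3), (2, 0), (1, 2)),
   ((0, 3), (2, 2), (1, 3)), ((0, 3), (3, 1), (2, 2)), ((0, 3), (4, 0), (3, 1)),
   ((0, 4), (1, 0), (1, 1)), ((0, 4), (1, 1), (1, 2)), ((0, 4), (1, 2), (1, 3)),
   ((0, 4), (1, 2), (2, 1)), ((0, 4), (2, 1), (1, 3)), ((0, 4), (2, 1), (3, 0)),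
   ((0, 4), (3, 0), (1, 3)), ((1, 0), (2, 0), (1, 1)), ((1, 0), (2, 0), (2, 1)),
   ((1, 0), (2, 0), (3, 1)), ((1, 0), (2, 1), (1, 1)), ((1, 0), (2, 1), (2, 2)),
   ((1, 0), (2, 2), (1, 1)), ((1, 0), (3, 1), (2, 1)), ((1, 1), (2, 0), (1, 2)),
   ((1, 1), (2, 0), (2, 1)), ((1, 1), (2, 0), (3, 0)), ((1, 1), (2, 1), (1, 2)),
   ((1, 1), (2, 1), (2, 2)), ((1, 1), (2, 2), (1, 2)), ((1, 1), (3, 0), (2, 1)),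
   ((1, 1), (3, 0), (4, 0)), ((1, 1), (4, 0), (2, 1)), ((1, 2), (2, 0), (1, 3)),
   ((1, 2), (2, 0), (2, 1)), ((1, 2), (2, 1), (1, 3)), ((1, 2), (2, 1), (2, 2)),
   ((1, 2), (2, 1), (3, 1)), ((1, 2), (2, 1), (4, 0)), ((1, 2), (2, 2), (1, 3)),
   ((1, 2), (3, 1), (2, 2)), ((1, 2), (4, 0), (3, 1)), ((1, 3), (2, 0), (2, 1)),
   ((1, 3), (2, 1), (2, 2)), ((1, 3), (2, 1), (3, 0)), ((1, 3), (3, 0), (2, 2)),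
   ((2, 0), (3, 0), (2, 1)), ((2, 0), (3, 0), (3, 1)), ((2, 0), (3, 1), (2, 1)),
   ((2, 1), (3, 0), (2, 2)), ((2, 1), (3, 0), (3, 1)), ((2, 1), (3, 0), (4, 0)),
   ((2, 1), (3, 1), (2, 2)), ((2, 1), (4, 0), (3, 1)), ((2, 2), (3, 0), (3, 1)),
   ((3, 0), (4, 0), (3, 1))]

lemma Lst_eq : Lst = LstG := by decide +kernel

lemma mem_latticePts {p : ℤ × ℤ} : p ∈ latticePts ↔ 0 ≤ p.1 ∧ 0 ≤ p.2 ∧ p.1 + p.2 ≤ 4 := by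
  simp only [latticePts, Finset.mem_filter, Finset.mem_product, Finset.mem_Icc]
  omega

lemma mem_pts {p : ℤ × ℤ} : p ∈ pts ↔ p ∈ latticePts := by
  rw [mem_latticePts]
  constructor
  · revert p; decide
  · obtain ⟨x, y⟩ := p
    rintro ⟨h1, h2, h3⟩
    dsimp only at h1 h2 h3
    have h4 : x ≤ 4 := by omega
    have h5 : y ≤ 4 := by omega
    interval_cases x <;> interval_cases y <;> first | (exfalso; omega) | decide

lemma mem_Lst {a b c : ℤ × ℤ} : (a, b, c) ∈ Lst ↔
    a ∈ latticePts ∧ b ∈ latticePts ∧ c ∈ latticePts ∧ key a < key b ∧ key a < key c ∧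
      ori a b c = 1 := by
  simp only [Lst_eq, LstG, List.mem_flatMap]
  constructor
  · rintro ⟨a', ha, b', hb, h⟩
    by_cases hk : key a' < key b'
    · simp only [hk, decide_true, cond_true, List.mem_map, List.mem_filter, Bool.and_eq_true,
        decide_eq_true_eq, Prod.mk.injEq] at h
      obtain ⟨c', ⟨hc, h1, h2⟩, rfl, rfl, rfl⟩ := h
      exact ⟨mem_pts.1 ha, mem_pts.1 hb, mem_pts.1 hc, hk, h1, h2⟩
    · simp [hk] at h
  · rintro ⟨ha, hb, hc, h1, h2, h3⟩
    refine ⟨a, mem_pts.2 ha, b, mem_pts.2 hb, ?_⟩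
    simp [h1, h2, h3, mem_pts.2 hc]

lemma triO_of_Lst {t : Tri} (h : t ∈ Lst) : triO t = 1 := (mem_Lst.1 h).2.2.2.2.2

lemma triS_sub_of_Lst {t : Tri} (h : t ∈ Lst) : triS t ⊆ latticePts := by
  obtain ⟨a, b, c⟩ := t
  have := mem_Lst.1 h
  intro p hp
  simp only [triS, Finset.mem_insert, Finset.mem_singleton] at hp
  rcases hp with rfl | rfl | rfl <;> tauto

lemma exists_Lst_aux {a b c : ℤ × ℤ} (ha : a ∈ latticePts) (hb : b ∈ latticePts)
    (hc : c ∈ latticePts) (h : ori a b c = 1) : ∃ t ∈ Lst, triS t = {a, b, c} := by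
  have hinj : ∀ p q : ℤ × ℤ, p ∈ latticePts → q ∈ latticePts → key p = key q → p = q := by
    intro p q hp hq hk
    rw [mem_latticePts] at hp hq
    unfold key at hk
    ext <;> omega
  have h' : ori b c a = 1 := by rw [← h]; unfold ori; ring
  have h'' : ori c a b = 1 := by rw [← h]; unfold ori; ring
  have hab : key a ≠ key b := fun hk => by
    rw [hinj a b ha hb hk] at h; unfold ori at h; norm_num at h
  have hac : key a ≠ key c := fun hk => by
    rw [hinj a c ha hc hk] at h; unfold ori at h; norm_num at h
  have hbc : key b ≠ key c := fun hk => by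
    rw [hinj b c hb hc hk] at h; unfold ori at h; ring_nf at h; norm_num at h
  by_cases h1 : key a < key b ∧ key a < key c
  · exact ⟨(a, b, c), mem_Lst.2 ⟨ha, hb, hc, h1.1, h1.2, h⟩, rfl⟩
  by_cases h2 : key b < key c ∧ key b < key a
  · refine ⟨(b, c, a), mem_Lst.2 ⟨hb, hc, ha, h2.1, h2.2, h'⟩, ?_⟩
    ext p; simp only [triS, Finset.mem_insert, Finset.mem_singleton]; tauto
  · refine ⟨(c, a, b), mem_Lst.2 ⟨hc, ha, hb, by omega, by omega, h''⟩, ?_⟩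
    ext p; simp only [triS, Finset.mem_insert, Finset.mem_singleton]; tauto

lemma exists_Lst {σ : Finset (ℤ × ℤ)} (hs : σ ⊆ latticePts) (h : IsUnimodularTriangle σ) :
    ∃ t ∈ Lst, triS t = σ := by
  obtain ⟨a, b, c, rfl, h⟩ := h
  have ha : a ∈ latticePts := hs (by simp)
  have hb : b ∈ latticePts := hs (by simp)
  have hc : c ∈ latticePts := hs (by simp)
  rcases Int.natAbs_eq_iff.1 h with h | h
  · exact exists_Lst_aux ha hb hc (by unfold ori; exact_mod_cast h)
  · obtain ⟨t, ht, hts⟩ := exists_Lst_aux ha hc hb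
      (by unfold ori; push_cast at h; linarith)
    refine ⟨t, ht, hts.trans ?_⟩
    ext p; simp only [Finset.mem_insert, Finset.mem_singleton]; tauto

lemma card_triS {t : Tri} (h : triO t = 1) : (triS t).card = 3 := by
  obtain ⟨a, b, c⟩ := t
  unfold triO ori at h
  rw [triS, Finset.card_eq_three]
  refine ⟨a, b, c, ?_, ?_, ?_, rfl⟩ <;> rintro rfl <;> ring_nf at h <;> norm_num at h

/-! ## Combinatorial consequences -/

/-- `T` is a unimodular triangulation induced by `lam` -/
def Good (T : Finset (Finset (ℤ × ℤ))) (lam : ℤ × ℤ → ℝ) : Prop :=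
  IsUnimodularTriangulation T ∧ Induces lam T

def crossE (p q a b : ℤ × ℤ) : Bool :=
  decide (ori p q a * ori p q b < 0) && decide (ori a b p * ori a b q < 0)

def edges (t : Tri) : List ((ℤ × ℤ) × (ℤ × ℤ)) := [(t.1, t.2.1), (t.2.1, t.2.2), (t.2.2, t.1)]

def crossTE (t : Tri) (e : (ℤ × ℤ) × (ℤ × ℤ)) : Bool :=
  (edges t).any fun f => crossE f.1 f.2 e.1 e.2

def crossT (t u : Tri) : Bool := (edges u).any fun e => crossTE t e

def oriD (a b X : ℤ × ℤ) : ℤ := (b.1 - a.1) * (X.2 - 60 * a.2) - (b.2 - a.2) * (X.1 - 60 * a.1)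

def cont (t : Tri) (X : ℤ × ℤ) : Bool :=
  decide (0 ≤ oriD t.1 t.2.1 X) && (decide (0 ≤ oriD t.2.1 t.2.2 X) &&
    decide (0 ≤ oriD t.2.2 t.1 X))

lemma Good.exists_tri {T lam} (h : Good T lam) {σ} (hσ : σ ∈ T) : ∃ t ∈ Lst, triS t = σ :=
  exists_Lst (h.1.1 σ hσ).1 (h.1.1 σ hσ).2

lemma Good.card {T lam} (h : Good T lam) {σ} (hσ : σ ∈ T) : σ.card = 3 := by
  obtain ⟨t, ht, rfl⟩ := h.exists_tri hσ
  exact card_triS (triO_of_Lst ht)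

lemma Good.strict {T lam} (h : Good T lam) {t : Tri} (ht : triO t = 1) (hT : triS t ∈ T) :
    Strict lam t := by
  obtain ⟨w, hw⟩ := ((h.2 _).1 hT).2
  exact strict_of_argmax ht hw

lemma good_of {T lam lam'} (h : Good T lam)
    (hs : ∀ t ∈ Lst, triS t ∈ T → Strict lam' t) : Good T lam' := by
  refine ⟨h.1, induces_of_argmax h.1.2.1 (fun σ hσ => h.card hσ) fun σ hσ => ?_⟩
  obtain ⟨t, ht, rfl⟩ := h.exists_tri hσ
  exact argmax_of_strict (triO_of_Lst ht) (triS_sub_of_Lst ht) (hs t ht hσ)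

lemma cross_aux {lam : ℤ × ℤ → ℝ} {w w' : ℝ × ℝ} {σ τ : Finset (ℤ × ℤ)}
    (hσ : IsArgmax lam w σ) (hτ : IsArgmax lam w' τ) {p q a b : ℤ × ℤ}
    (hp : p ∈ σ) (hq : q ∈ σ) (ha : a ∈ τ) (hb : b ∈ τ) {u v r s : ℤ}
    (hu : 0 < u) (hv : 0 < v) (hr : 0 < r) (hs : 0 < s) (h1 : u + v = r + s)
    (h2 : v * p.1 + u * q.1 = s * a.1 + r * b.1) (h3 : v * p.2 + u * q.2 = s * a.2 + r * b.2) :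
    a ∈ σ ∧ b ∈ σ := by
  have hu' : (0 : ℝ) < u := by exact_mod_cast hu
  have hv' : (0 : ℝ) < v := by exact_mod_cast hv
  have hr' : (0 : ℝ) < r := by exact_mod_cast hr
  have hs' : (0 : ℝ) < s := by exact_mod_cast hs
  have h1' : (u : ℝ) + v = r + s := by exact_mod_cast h1
  have h2' : (v : ℝ) * p.1 + u * q.1 = s * a.1 + r * b.1 := by exact_mod_cast h2
  have h3' : (v : ℝ) * p.2 + u * q.2 = s * a.2 + r * b.2 := by exact_mod_cast h3
  have hp' := (hσ p).1 hp
  have hq' := (hσ q).1 hq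
  have ha' := (hτ a).1 ha
  have hb' := (hτ b).1 hb
  have e1 := le_antisymm (hp'.2 q hq'.1) (hq'.2 p hp'.1)
  have e2 := le_antisymm (ha'.2 b hb'.1) (hb'.2 a ha'.1)
  have f1 : v * (mval lam a w' - mval lam p w') + u * (mval lam a w' - mval lam q w') ≥ 0 := by
    have := ha'.2 p hp'.1
    have := ha'.2 q hq'.1
    have : 0 ≤ mval lam a w' - mval lam p w' := by linarith
    have : 0 ≤ mval lam a w' - mval lam q w' := by linarith
    positivity
  have g1 : 0 ≤ mval lam p w - mval lam a w := by linarith [hp'.2 a ha'.1]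
  have g2 : 0 ≤ mval lam p w - mval lam b w := by linarith [hp'.2 b hb'.1]
  have I : s * (mval lam p w - mval lam a w) + r * (mval lam p w - mval lam b w) =
      -(v * (mval lam a w' - mval lam p w') + u * (mval lam a w' - mval lam q w')) := by
    have E1 : s * (mval lam p w - mval lam a w) + r * (mval lam p w - mval lam b w) =
        v * mval lam p w + u * mval lam q w - s * mval lam a w - r * mval lam b w := by
      rw [e1]; linear_combination (-(mval lam p w)) * h1'
    have E2 : (v * (mval lam a w' - mval lam p w') + u * (mval lam a w' - mval lam q w')) =
        s * mval lam a w' + r * mval lam b w' - v * mval lam p w' - u * mval lam q w' := by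
      rw [e2]; linear_combination (mval lam a w') * h1'
    rw [E1, E2]
    unfold mval
    linear_combination (w.1 - w'.1) * h2' + (w.2 - w'.2) * h3'
  have z1 : s * (mval lam p w - mval lam a w) = 0 := by
    have := mul_nonneg hs'.le g1; have := mul_nonneg hr'.le g2; linarith
  have z2 : r * (mval lam p w - mval lam b w) = 0 := by
    have := mul_nonneg hs'.le g1; have := mul_nonneg hr'.le g2; linarith
  have y1 := (mul_eq_zero.1 z1).resolve_left hs'.ne'
  have y2 := (mul_eq_zero.1 z2).resolve_left hr'.ne'
  exact ⟨(hσ a).2 ⟨ha'.1, fun x hx => by linarith [hp'.2 x hx]⟩,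
    (hσ b).2 ⟨hb'.1, fun x hx => by linarith [hp'.2 x hx]⟩⟩

lemma Good.not_crossE {T lam} (h : Good T lam) {σ τ} (hσ : σ ∈ T) (hτ : τ ∈ T)
    {p q a b : ℤ × ℤ} (hp : p ∈ σ) (hq : q ∈ σ) (ha : a ∈ τ) (hb : b ∈ τ) :
    crossE p q a b = false := by
  by_contra hc
  rw [Bool.not_eq_false] at hc
  simp only [crossE, Bool.and_eq_true, decide_eq_true_eq] at hc
  obtain ⟨c1, c2⟩ := hc
  obtain ⟨w, hw⟩ := ((h.2 _).1 hσ).2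
  obtain ⟨w', hw'⟩ := ((h.2 _).1 hτ).2
  have hid : ori p q b - ori p q a + (ori a b q - ori a b p) = 0 := by unfold ori; ring
  have h21 : ori a b p * q.1 - ori a b q * p.1 = ori p q b * a.1 - ori p q a * b.1 := by
    unfold ori; ring
  have h22 : ori a b p * q.2 - ori a b q * p.2 = ori p q b * a.2 - ori p q a * b.2 := by
    unfold ori; ring
  have hab : a ∈ σ ∧ b ∈ σ := by
    rcases mul_neg_iff.1 c1 with ⟨n1, m1⟩ | ⟨n1, m1⟩ <;>
      rcases mul_neg_iff.1 c2 with ⟨n2, m2⟩ | ⟨n2, m2⟩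
    · exfalso; linarith
    · exact cross_aux hw hw' hp hq ha hb (u := -ori a b p) (v := ori a b q) (r := ori p q a)
        (s := -ori p q b) (by linarith) m2 (by linarith) (by linarith) (by linarith)
        (by linarith) (by linarith)
    · exact cross_aux hw hw' hp hq ha hb (u := ori a b p) (v := -ori a b q) (r := -ori p q a)
        (s := ori p q b) (by linarith) (by linarith) (by linarith) (by linarith) (by linarith)
        (by linarith) (by linarith)
    · exfalso; linarith
  have hcard : ({p, q, a, b} : Finset (ℤ × ℤ)).card ≤ σ.card := by
    apply Finset.card_le_card
    intro x hx
    simp only [Finset.mem_insert, Finset.mem_singleton] at hx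
    rcases hx with rfl | rfl | rfl | rfl
    · exact hp
    · exact hq
    · exact hab.1
    · exact hab.2
  have d1 : p ≠ q := by
    rintro rfl; rw [show ori p p a = 0 by unfold ori; ring] at c1; simp at c1
  have d2 : p ≠ a := by
    rintro rfl; rw [show ori p q p = 0 by unfold ori; ring] at c1; simp at c1
  have d3 : p ≠ b := by
    rintro rfl; rw [show ori p q p = 0 by unfold ori; ring] at c1; simp at c1
  have d4 : q ≠ a := by
    rintro rfl; rw [show ori p q q = 0 by unfold ori; ring] at c1; simp at c1
  have d5 : q ≠ b := by
    rintro rfl; rw [show ori p q q = 0 by unfold ori; ring] at c1; simp at c1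
  have d6 : a ≠ b := by
    rintro rfl; rw [show ori a a p = 0 by unfold ori; ring] at c2; simp at c2
  rw [h.card hσ, Finset.card_insert_of_notMem (by simp [d1, d2, d3]),
    Finset.card_insert_of_notMem (by simp [d4, d5]), Finset.card_pair d6] at hcard
  omega

def EdgeIn (T : Finset (Finset (ℤ × ℤ))) (e : (ℤ × ℤ) × (ℤ × ℤ)) : Prop :=
  ∃ σ ∈ T, e.1 ∈ σ ∧ e.2 ∈ σ

lemma Good.not_crossTE {T lam} (h : Good T lam) {t : Tri} (ht : triS t ∈ T)
    {e : (ℤ × ℤ) × (ℤ × ℤ)} (he : EdgeIn T e) : crossTE t e = false := by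
  obtain ⟨τ, hτ, h1, h2⟩ := he
  have A : ∀ p ∈ triS t, ∀ q ∈ triS t, crossE p q e.1 e.2 = false := fun p hp q hq =>
    h.not_crossE ht hτ hp hq h1 h2
  simp only [crossTE, edges, List.any_cons, List.any_nil]
  rw [A _ (by simp [triS]) _ (by simp [triS]), A _ (by simp [triS]) _ (by simp [triS]),
    A _ (by simp [triS]) _ (by simp [triS])]
  rfl

lemma Good.not_crossT {T lam} (h : Good T lam) {t u : Tri} (ht : triS t ∈ T)
    (hu : triS u ∈ T) : crossT t u = false := by
  have A : ∀ p ∈ triS u, ∀ q ∈ triS u, crossTE t (p, q) = false := fun p hp q hq =>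
    h.not_crossTE ht ⟨_, hu, hp, hq⟩
  simp only [crossT, edges, List.any_cons, List.any_nil]
  rw [A _ (by simp [triS]) _ (by simp [triS]), A _ (by simp [triS]) _ (by simp [triS]),
    A _ (by simp [triS]) _ (by simp [triS])]
  rfl

/-- real orientation -/
def oriR (a b : ℤ × ℤ) (x : ℝ × ℝ) : ℝ :=
  ((b.1 : ℝ) - a.1) * (x.2 - a.2) - ((b.2 : ℝ) - a.2) * (x.1 - a.1)

lemma mem_rhull_triS {t : Tri} (h : triO t = 1) {x : ℝ × ℝ} : x ∈ rhull (triS t) ↔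
    0 ≤ oriR t.1 t.2.1 x ∧ 0 ≤ oriR t.2.1 t.2.2 x ∧ 0 ≤ oriR t.2.2 t.1 x := by
  obtain ⟨a, b, c⟩ := t
  have h1 := triO_real h
  have hne : a ≠ b ∧ a ≠ c ∧ b ≠ c := by
    refine ⟨?_, ?_, ?_⟩ <;> rintro rfl <;> ring_nf at h1 <;> norm_num at h1
  have hsum : ∀ f : ℤ × ℤ → ℝ, ∑ p ∈ triS (a, b, c), f p = f a + f b + f c := by
    intro f
    rw [triS, Finset.sum_insert (by simp [hne.1, hne.2.1]), Finset.sum_pair hne.2.2]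
    ring
  rw [mem_rhull]
  simp only [hsum]
  constructor
  · rintro ⟨d, d0, d1, d2, d3⟩
    have ha := d0 a (by simp [triS])
    have hb := d0 b (by simp [triS])
    have hc := d0 c (by simp [triS])
    have e1 : oriR a b x = d c := by
      unfold oriR; rw [← d2, ← d3]
      have : d a = 1 - d b - d c := by linarith
      rw [this]
      linear_combination (d c) * h1
    have e2 : oriR b c x = d a := by
      unfold oriR; rw [← d2, ← d3]
      have : d b = 1 - d a - d c := by linarith
      rw [this]
      linear_combination (d a) * h1
    have e3 : oriR c a x = d b := by
      unfold oriR; rw [← d2, ← d3]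
      have : d a = 1 - d b - d c := by linarith
      rw [this]
      linear_combination (d b) * h1
    simp only [e1, e2, e3]
    exact ⟨hc, ha, hb⟩
  · rintro ⟨k1, k2, k3⟩
    refine ⟨fun p => if p = a then oriR b c x else if p = b then oriR c a x else oriR a b x,
      fun p _ => by dsimp only; split_ifs <;> assumption, ?_, ?_, ?_⟩
    all_goals
      simp only [hne.1.symm, hne.2.1.symm, hne.2.2.symm, if_true, if_false]
      unfold oriR
    · linear_combination h1
    · linear_combination x.1 * h1
    · linear_combination x.2 * h1

lemma mem_rhull_lattice {x : ℝ × ℝ} :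
    x ∈ rhull latticePts ↔ 0 ≤ x.1 ∧ 0 ≤ x.2 ∧ x.1 + x.2 ≤ 4 := by
  constructor
  · intro hx
    obtain ⟨c, h0, h1, h2, h3⟩ := mem_rhull.1 hx
    have hb : ∀ p ∈ latticePts, (0 : ℝ) ≤ p.1 ∧ (0 : ℝ) ≤ p.2 ∧ (p.1 : ℝ) + p.2 ≤ 4 := by
      intro p hp; have := mem_latticePts.1 hp; exact_mod_cast this
    refine ⟨?_, ?_, ?_⟩
    · rw [← h2]; exact Finset.sum_nonneg fun p hp => mul_nonneg (h0 p hp) (hb p hp).1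
    · rw [← h3]; exact Finset.sum_nonneg fun p hp => mul_nonneg (h0 p hp) (hb p hp).2.1
    · rw [← h2, ← h3, ← Finset.sum_add_distrib]
      calc _ ≤ ∑ p ∈ latticePts, c p * 4 := by
            refine Finset.sum_le_sum fun p hp => ?_
            have := mul_le_mul_of_nonneg_left (hb p hp).2.2 (h0 p hp)
            linarith
        _ = 4 := by rw [← Finset.sum_mul, h1, one_mul]
  · rintro ⟨h1, h2, h3⟩
    have hsub : ({(0, 0), (4, 0), (0, 4)} : Finset (ℤ × ℤ)) ⊆ latticePts := by
      intro p hp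
      simp only [Finset.mem_insert, Finset.mem_singleton] at hp
      rw [mem_latticePts]
      rcases hp with rfl | rfl | rfl <;> norm_num
    apply rhull_mono hsub
    rw [mem_rhull]
    refine ⟨fun p => if p = (0, 0) then 1 - x.1 / 4 - x.2 / 4 else if p = (4, 0) then x.1 / 4
      else x.2 / 4, fun p _ => by dsimp only; split_ifs <;> linarith, ?_, ?_, ?_⟩
    all_goals
      rw [Finset.sum_insert (by decide), Finset.sum_pair (by decide)]
      norm_num

lemma Good.cover {T lam} (h : Good T lam) (X : ℤ × ℤ)
    (hX : 0 ≤ X.1 ∧ 0 ≤ X.2 ∧ X.1 + X.2 ≤ 240) :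
    ∃ t ∈ Lst, triS t ∈ T ∧ cont t X = true := by
  have hx : ((X.1 / 60 : ℝ), (X.2 / 60 : ℝ)) ∈ rhull latticePts := by
    rw [mem_rhull_lattice]
    obtain ⟨h1, h2, h3⟩ := hX
    have h1' : (0 : ℝ) ≤ X.1 := by exact_mod_cast h1
    have h2' : (0 : ℝ) ≤ X.2 := by exact_mod_cast h2
    have h3' : (X.1 : ℝ) + X.2 ≤ 240 := by exact_mod_cast h3
    refine ⟨by positivity, by positivity, ?_⟩
    dsimp only; linarith
  rw [← h.1.2.1] at hx
  simp only [Set.mem_iUnion] at hx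
  obtain ⟨σ, hσ, hx⟩ := hx
  obtain ⟨t, ht, rfl⟩ := h.exists_tri hσ
  refine ⟨t, ht, hσ, ?_⟩
  rw [mem_rhull_triS (triO_of_Lst ht)] at hx
  have conv : ∀ a b : ℤ × ℤ, 0 ≤ oriR a b ((X.1 / 60 : ℝ), (X.2 / 60 : ℝ)) → 0 ≤ oriD a b X := by
    intro a b hab
    have : (oriD a b X : ℝ) = 60 * oriR a b ((X.1 / 60 : ℝ), (X.2 / 60 : ℝ)) := by
      unfold oriD oriR; push_cast; ring
    have h2 : (0 : ℝ) ≤ (oriD a b X : ℝ) := by rw [this]; positivity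
    exact_mod_cast h2
  simp only [cont, Bool.and_eq_true, decide_eq_true_eq]
  exact ⟨conv _ _ hx.1, conv _ _ hx.2.1, conv _ _ hx.2.2⟩

/-! ## Search engine -/

def srch (ok : List Tri → Bool) : List (ℤ × ℤ) → List Tri → Bool
  | [], rest => ok rest
  | X :: Xs, rest => rest.all fun t => bif cont t X then
      srch ok Xs (rest.filter fun u => !crossT u t) else true

lemma Good.srch {T lam} (h : Good T lam) (ok : List Tri → Bool) (Xs : List (ℤ × ℤ))
    (hX : ∀ X ∈ Xs, 0 ≤ X.1 ∧ 0 ≤ X.2 ∧ X.1 + X.2 ≤ 240) (rest : List Tri)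
    (hr : ∀ t ∈ Lst, triS t ∈ T → t ∈ rest) (hs : srch ok Xs rest = true) :
    ∃ rest' : List Tri, (∀ t ∈ Lst, triS t ∈ T → t ∈ rest') ∧ ok rest' = true := by
  induction Xs generalizing rest with
  | nil => exact ⟨rest, hr, hs⟩
  | cons X Xs ih =>
    obtain ⟨t, ht, htT, hc⟩ := h.cover X (hX X (by simp))
    simp only [_root_.srch, List.all_eq_true] at hs
    have := hs t (hr t ht htT)
    rw [hc, cond_true] at this
    refine ih (fun Y hY => hX Y (by simp [hY])) _ ?_ this
    intro u hu huT
    simp only [List.mem_filter, hr u hu huT, h.not_crossT huT htT, Bool.not_false, and_self]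

/-! ## Genericity in terms of heights -/

def cen : Tri := ((1, 1), (2, 1), (1, 2))
def t1 (i : ℤ) : Tri := ((1, 1), (1, 2), (0, i))
def t2 (j : ℤ) : Tri := ((2, 1), (1, 1), (j, 0))
def t3 (k : ℤ) : Tri := ((1, 2), (2, 1), (k, 4 - k))

def hN (lam : ℤ × ℤ → ℝ) (p : ℤ × ℤ) : ℝ := ell lam cen p - lam p

lemma hN_eq (lam : ℤ × ℤ → ℝ) (p : ℤ × ℤ) : hN lam p =
    lam (1, 1) * (3 - p.1 - p.2) + lam (2, 1) * (p.1 - 1) + lam (1, 2) * (p.2 - 1) - lam p := by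
  simp only [hN, ell, cen, ori]; push_cast; ring

lemma hN_nonneg {lam : ℤ × ℤ → ℝ} (hc : Strict lam cen) {p : ℤ × ℤ} (hp : p ∈ latticePts) :
    0 ≤ hN lam p := by
  unfold hN
  by_cases h : p ∈ triS cen
  · rw [ell_vert lam cen (by decide) p h]; simp
  · linarith [hc p hp h]

lemma le_ell {lam : ℤ × ℤ → ℝ} {t : Tri} (ht : triO t = 1) (hc : Strict lam t) {p : ℤ × ℤ}
    (hp : p ∈ latticePts) : lam p ≤ ell lam t p := by
  by_cases h : p ∈ triS t
  · rw [ell_vert lam t ht p h]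
  · exact (hc p hp h).le

lemma triO_t1 (i : ℤ) : triO (t1 i) = 1 := by simp only [triO, t1, ori]; ring
lemma triO_t2 (i : ℤ) : triO (t2 i) = 1 := by simp only [triO, t2, ori]; ring
lemma triO_t3 (i : ℤ) : triO (t3 i) = 1 := by simp only [triO, t3, ori]; ring

lemma hN_min1 {lam : ℤ × ℤ → ℝ} {i : ℤ} (h : Strict lam (t1 i)) {p : ℤ × ℤ}
    (hp : p ∈ latticePts) (h0 : p.1 = 0) : hN lam (0, i) ≤ hN lam p := by
  have h1 := le_ell (triO_t1 i) h hp
  obtain ⟨x, y⟩ := p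
  dsimp only at h0; subst h0
  simp only [hN_eq, ell, t1, ori] at *
  push_cast at *
  linarith

lemma hN_min2 {lam : ℤ × ℤ → ℝ} {i : ℤ} (h : Strict lam (t2 i)) {p : ℤ × ℤ}
    (hp : p ∈ latticePts) (h0 : p.2 = 0) : hN lam (i, 0) ≤ hN lam p := by
  have h1 := le_ell (triO_t2 i) h hp
  obtain ⟨x, y⟩ := p
  dsimp only at h0; subst h0
  simp only [hN_eq, ell, t2, ori] at *
  push_cast at *
  linarith

lemma hN_min3 {lam : ℤ × ℤ → ℝ} {i : ℤ} (h : Strict lam (t3 i)) {p : ℤ × ℤ}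
    (hp : p ∈ latticePts) (h0 : p.1 + p.2 = 4) : hN lam (i, 4 - i) ≤ hN lam p := by
  have h1 := le_ell (triO_t3 i) h hp
  obtain ⟨x, y⟩ := p
  dsimp only at h0
  obtain rfl : y = 4 - x := by omega
  simp only [hN_eq, ell, t3, ori] at *
  push_cast at *
  linarith

lemma mu1_eq {lam : ℤ × ℤ → ℝ} (hc : Strict lam cen) {i : ℤ} (hi : (0, i) ∈ latticePts)
    (h : Strict lam (t1 i)) : edgeSet1 lam (1, 1) = Set.Icc 0 (hN lam (0, i)) := by
  have key : ∀ r : ℤ × ℤ, ∀ t : ℝ,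
      mval lam r ((dvtx lam (1, 1)).1 - t, (dvtx lam (1, 1)).2) =
      mval lam (1, 1) ((dvtx lam (1, 1)).1 - t, (dvtx lam (1, 1)).2) - hN lam r
        - (r.1 - 1) * t := by
    intro r t
    simp only [mval, dvtx, pE1, pE2, hN_eq]; push_cast; norm_num; ring
  ext t
  simp only [edgeSet1, OnDualEdge, Set.mem_setOf_eq, Set.mem_Icc]
  refine and_congr_right fun ht => ⟨fun ⟨_, h2⟩ => ?_, fun h1 => ⟨?_, fun r hr => ?_⟩⟩
  · have := h2 (0, i) hi
    rw [key (0, i) t] at this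
    push_cast at this; linarith
  · simp only [mval, dvtx, pE1, pE2]; push_cast; ring
  · rw [key r t]
    have h0 := hN_nonneg hc hr
    have hr' := mem_latticePts.1 hr
    by_cases h3 : r.1 = 0
    · have := hN_min1 h hr h3
      rw [h3]; push_cast; linarith
    · have h4 : (1 : ℝ) ≤ r.1 := by exact_mod_cast (by omega : (1 : ℤ) ≤ r.1)
      have : 0 ≤ ((r.1 : ℝ) - 1) * t := mul_nonneg (by linarith) ht
      linarith

lemma mu2_eq {lam : ℤ × ℤ → ℝ} (hc : Strict lam cen) {i : ℤ} (hi : (i, 0) ∈ latticePts)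
    (h : Strict lam (t2 i)) : edgeSet2 lam (1, 1) = Set.Icc 0 (hN lam (i, 0)) := by
  have key : ∀ r : ℤ × ℤ, ∀ t : ℝ,
      mval lam r ((dvtx lam (1, 1)).1, (dvtx lam (1, 1)).2 - t) =
      mval lam (1, 1) ((dvtx lam (1, 1)).1, (dvtx lam (1, 1)).2 - t) - hN lam r
        - (r.2 - 1) * t := by
    intro r t
    simp only [mval, dvtx, pE1, pE2, hN_eq]; push_cast; norm_num; ring
  ext t
  simp only [edgeSet2, OnDualEdge, Set.mem_setOf_eq, Set.mem_Icc]
  refine and_congr_right fun ht => ⟨fun ⟨_, h2⟩ => ?_, fun h1 => ⟨?_, fun r hr => ?_⟩⟩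
  · have := h2 (i, 0) hi
    rw [key (i, 0) t] at this
    push_cast at this; linarith
  · simp only [mval, dvtx, pE1, pE2]; push_cast; ring
  · rw [key r t]
    have h0 := hN_nonneg hc hr
    have hr' := mem_latticePts.1 hr
    by_cases h3 : r.2 = 0
    · have := hN_min2 h hr h3
      rw [h3]; push_cast; linarith
    · have h4 : (1 : ℝ) ≤ r.2 := by exact_mod_cast (by omega : (1 : ℤ) ≤ r.2)
      have : 0 ≤ ((r.2 : ℝ) - 1) * t := mul_nonneg (by linarith) ht
      linarith

lemma mu3_eq {lam : ℤ × ℤ → ℝ} (hc : Strict lam cen) {i : ℤ} (hi : (i, 4 - i) ∈ latticePts)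
    (h : Strict lam (t3 i)) : edgeSet3 lam (1, 1) = Set.Icc 0 (hN lam (i, 4 - i)) := by
  have key : ∀ r : ℤ × ℤ, ∀ t : ℝ,
      mval lam r ((dvtx lam (1, 1)).1 + t, (dvtx lam (1, 1)).2 + t) =
      mval lam (pE1 (1, 1)) ((dvtx lam (1, 1)).1 + t, (dvtx lam (1, 1)).2 + t) - hN lam r
        + (r.1 + r.2 - 3) * t := by
    intro r t
    simp only [mval, dvtx, pE1, pE2, hN_eq]; push_cast; norm_num; ring
  ext t
  simp only [edgeSet3, OnDualEdge, Set.mem_setOf_eq, Set.mem_Icc]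
  refine and_congr_right fun ht => ⟨fun ⟨_, h2⟩ => ?_, fun h1 => ⟨?_, fun r hr => ?_⟩⟩
  · have := h2 (i, 4 - i) hi
    rw [key (i, 4 - i) t] at this
    push_cast at this; linarith
  · simp only [mval, dvtx, pE1, pE2]; push_cast; ring
  · rw [key r t]
    have h0 := hN_nonneg hc hr
    have hr' := mem_latticePts.1 hr
    by_cases h3 : r.1 + r.2 = 4
    · have := hN_min3 h hr h3
      have h4 : (r.1 : ℝ) + r.2 = 4 := by exact_mod_cast h3
      rw [h4]; linarith
    · have h4 : (r.1 : ℝ) + r.2 ≤ 3 := by exact_mod_cast (by omega : r.1 + r.2 ≤ 3)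
      have : 0 ≤ (3 - (r.1 + r.2 : ℝ)) * t := mul_nonneg (by linarith) ht
      linarith

lemma not_bdd {A : Set ℝ} (h : ∀ t, 0 ≤ t → t ∈ A) : ¬ BddAbove A := by
  rintro ⟨M, hM⟩
  have := hM (h (|M| + 1) (by positivity))
  have := le_abs_self M
  linarith

lemma cvertex_center {lam : ℤ × ℤ → ℝ} {p : ℤ × ℤ} (h : HasCVertexAt lam p) : p = (1, 1) := by
  obtain ⟨⟨w, hw⟩, h1, h2, h3⟩ := h
  have hp := (hw p).1 (by simp [downTri])
  have hp1 := (hw (pE1 p)).1 (by simp [downTri])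
  have hp2 := (hw (pE2 p)).1 (by simp [downTri])
  have e1 := le_antisymm (hp.2 _ hp1.1) (hp1.2 _ hp.1)
  have e2 := le_antisymm (hp.2 _ hp2.1) (hp2.2 _ hp.1)
  have hwd : w = dvtx lam p := by
    simp only [mval, pE1, pE2] at e1 e2
    push_cast at e1 e2
    ext
    · simp only [dvtx, pE1]; linarith
    · simp only [dvtx, pE2]; linarith
  have b0 := mem_latticePts.1 hp.1
  have b1 := mem_latticePts.1 hp1.1
  simp only [pE1] at b1
  have c1 : p.1 ≠ 0 := by
    intro h0
    refine not_bdd (fun t ht => ?_) h1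
    refine ⟨ht, ?_, fun r hr => ?_⟩
    · rw [← hwd]
      simp only [mval, pE2] at e2 ⊢
      rw [h0] at e2 ⊢; push_cast at e2 ⊢; linarith
    · rw [← hwd]
      have := hp.2 r hr
      have hr0 : (0 : ℝ) ≤ r.1 := by exact_mod_cast (mem_latticePts.1 hr).1
      have := mul_nonneg hr0 ht
      simp only [mval] at *
      rw [h0] at *; push_cast at *; linarith
  have c2 : p.2 ≠ 0 := by
    intro h0
    refine not_bdd (fun t ht => ?_) h2
    refine ⟨ht, ?_, fun r hr => ?_⟩
    · rw [← hwd]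
      simp only [mval, pE1] at e1 ⊢
      rw [h0] at e1 ⊢; push_cast at e1 ⊢; linarith
    · rw [← hwd]
      have := hp.2 r hr
      have hr0 : (0 : ℝ) ≤ r.2 := by exact_mod_cast (mem_latticePts.1 hr).2.1
      have := mul_nonneg hr0 ht
      simp only [mval] at *
      rw [h0] at *; push_cast at *; linarith
  have c3 : p.1 + p.2 ≠ 3 := by
    intro h0
    have h0' : (p.2 : ℝ) = 3 - p.1 := by
      have : (p.1 : ℝ) + p.2 = 3 := by exact_mod_cast h0
      linarith
    refine not_bdd (fun t ht => ?_) h3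
    refine ⟨ht, ?_, fun r hr => ?_⟩
    · rw [← hwd]
      simp only [mval, pE1, pE2] at e1 e2 ⊢
      push_cast at e1 e2 ⊢; linarith
    · rw [← hwd]
      have := hp.2 r hr
      have hr0 : (0 : ℝ) ≤ 4 - r.1 - r.2 := by
        have : (r.1 : ℝ) + r.2 ≤ 4 := by exact_mod_cast (mem_latticePts.1 hr).2.2
        linarith
      have := mul_nonneg hr0 ht
      simp only [mval, pE1] at *
      rw [h0'] at *; push_cast at *; linarith
  ext <;> simp only <;> omega

lemma downTri_cen : downTri (1, 1) = triS cen := by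
  simp [downTri, triS, cen, pE1, pE2]

lemma generic_of_not_cen {T lam} (h : Good T lam) (hc : triS cen ∉ T) :
    SatisfiesGenericityI lam := by
  intro p hp
  obtain rfl := cvertex_center hp
  exfalso
  apply hc
  rw [h.2 _, ← downTri_cen]
  refine ⟨?_, hp.1⟩
  rw [downTri_cen, card_triS (by decide)]

/-- the motif at the central triangle -/
def Motif (T : Finset (Finset (ℤ × ℤ))) (i j k : ℤ) : Prop :=
  triS cen ∈ T ∧ triS (t1 i) ∈ T ∧ triS (t2 j) ∈ T ∧ triS (t3 k) ∈ T

lemma generic_iff {T lam i j k} (h : Good T lam) (hm : Motif T i j k) :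
    SatisfiesGenericityI lam ↔
      UniqueShortest (hN lam (0, i)) (hN lam (j, 0)) (hN lam (k, 4 - k)) := by
  obtain ⟨m0, m1, m2, m3⟩ := hm
  have s0 := h.strict (by decide) m0
  have s1 := h.strict (triO_t1 i) m1
  have s2 := h.strict (triO_t2 j) m2
  have s3 := h.strict (triO_t3 k) m3
  have l1 : (0, i) ∈ latticePts := (h.1.1 _ m1).1 (by simp [triS, t1])
  have l2 : (j, 0) ∈ latticePts := (h.1.1 _ m2).1 (by simp [triS, t2])
  have l3 : (k, 4 - k) ∈ latticePts := (h.1.1 _ m3).1 (by simp [triS, t3])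
  have e1 := mu1_eq s0 l1 s1
  have e2 := mu2_eq s0 l2 s2
  have e3 := mu3_eq s0 l3 s3
  have f1 : mu1 lam (1, 1) = hN lam (0, i) := by
    rw [mu1, e1, csSup_Icc (hN_nonneg s0 l1)]
  have f2 : mu2 lam (1, 1) = hN lam (j, 0) := by
    rw [mu2, e2, csSup_Icc (hN_nonneg s0 l2)]
  have f3 : mu3 lam (1, 1) = hN lam (k, 4 - k) := by
    rw [mu3, e3, csSup_Icc (hN_nonneg s0 l3)]
  have hv : HasCVertexAt lam (1, 1) := by
    refine ⟨?_, ?_, ?_, ?_⟩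
    · rw [downTri_cen]; exact ((h.2 _).1 m0).2
    · rw [e1]; exact bddAbove_Icc
    · rw [e2]; exact bddAbove_Icc
    · rw [e3]; exact bddAbove_Icc
  rw [← f1, ← f2, ← f3]
  constructor
  · intro hg; exact hg _ hv
  · intro hu p hp
    obtain rfl := cvertex_center hp
    exact hu

/-! ## Perturbation -/

lemma Good.perturb {T lam} (h : Good T lam) (g : ℤ × ℤ → ℝ) :
    ∃ ε : ℝ, 0 < ε ∧ Good T (fun p => lam p + ε * g p) := by
  have key : ∀ᶠ ε in nhdsWithin (0 : ℝ) (Set.Ioi 0), ∀ t ∈ Lst.toFinset, ∀ p ∈ latticePts,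
      triS t ∈ T → p ∉ triS t → lam p + ε * g p < ell lam t p + ε * ell g t p := by
    rw [Filter.eventually_all_finset]
    intro t ht
    rw [Filter.eventually_all_finset]
    intro p hp
    by_cases hT : triS t ∈ T
    swap
    · exact Filter.Eventually.of_forall fun _ h => absurd h hT
    by_cases hpt : p ∈ triS t
    · exact Filter.Eventually.of_forall fun _ _ h => absurd hpt h
    have h0 := h.strict (triO_of_Lst (List.mem_toFinset.1 ht)) hT p hp hpt
    have c1 : Continuous fun ε : ℝ => lam p + ε * g p := by fun_prop
    have c2 : Continuous fun ε : ℝ => ell lam t p + ε * ell g t p := by fun_prop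
    have : ∀ᶠ ε in nhds (0 : ℝ), lam p + ε * g p < ell lam t p + ε * ell g t p :=
      (c1.tendsto 0).eventually_lt (c2.tendsto 0) (by simpa using h0)
    exact (this.filter_mono nhdsWithin_le_nhds).mono fun _ h _ _ => h
  obtain ⟨ε, h1, h2⟩ := (key.and self_mem_nhdsWithin).exists
  refine ⟨ε, h2, good_of h fun t ht hT p hp hpt => ?_⟩
  rw [ell_add]
  exact h1 t (List.mem_toFinset.2 ht) p hp hT hpt

lemma Good.shift {T lam} (h : Good T lam) (g : ℤ × ℤ → ℝ)
    (hg : ∀ t ∈ Lst, triS t ∈ T → ∀ p ∈ latticePts, g p ≤ ell g t p) (s : ℝ) (hs : 0 ≤ s) :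
    Good T (fun p => lam p + s * g p) := by
  refine good_of h fun t ht hT p hp hpt => ?_
  rw [ell_add]
  have h1 := h.strict (triO_of_Lst ht) hT p hp hpt
  have h2 := mul_le_mul_of_nonneg_left (hg t ht hT p hp) hs
  linarith

lemma hN_add (lam g : ℤ × ℤ → ℝ) (s : ℝ) (p : ℤ × ℤ) :
    hN (fun q => lam q + s * g q) p = hN lam p + s * hN g p := by
  simp only [hN_eq]; ring

lemma hN_single {q p : ℤ × ℤ} (hq : q ∉ triS cen) :
    hN (fun r => if r = q then 1 else 0) p = if p = q then -1 else 0 := by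
  have : (1, 1) ≠ q ∧ (2, 1) ≠ q ∧ (1, 2) ≠ q := by
    refine ⟨?_, ?_, ?_⟩ <;> rintro rfl <;> exact hq (by decide)
  rw [hN_eq]
  simp only [this.1, this.2.1, this.2.2, if_false]
  split_ifs <;> ring

/-- a generic dual curve exists when the three motif vertices are distinct -/
lemma generic_of_distinct {T lam i j k} (h : Good T lam) (hm : Motif T i j k)
    (d1 : ((0 : ℤ), i) ≠ (j, 0)) (d2 : ((0 : ℤ), i) ≠ (k, 4 - k))
    (d3 : (j, (0 : ℤ)) ≠ (k, 4 - k)) : ∃ lam', Good T lam' ∧ SatisfiesGenericityI lam' := by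
  have n1 : ((0 : ℤ), i) ∉ triS cen := by simp [triS, cen]
  have n2 : (j, (0 : ℤ)) ∉ triS cen := by simp [triS, cen]
  have n3 : (k, 4 - k) ∉ triS cen := by
    simp only [triS, cen, Finset.mem_insert, Finset.mem_singleton, Prod.mk.injEq]; omega
  have key : ∀ q, q ∉ triS cen → ∃ ε : ℝ, 0 < ε ∧ ∃ lam', Good T lam' ∧
      ∀ p, hN lam' p = hN lam p + ε * (if p = q then -1 else 0) := by
    intro q hq
    obtain ⟨ε, h0, h1⟩ := h.perturb (fun r => if r = q then 1 else 0)
    refine ⟨ε, h0, _, h1, fun p => ?_⟩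
    rw [hN_add, hN_single hq]
  rcases le_total (hN lam (0, i)) (hN lam (j, 0)) with a | a <;>
  rcases le_total (hN lam (0, i)) (hN lam (k, 4 - k)) with b | b <;>
  rcases le_total (hN lam (j, 0)) (hN lam (k, 4 - k)) with c | c
  all_goals first
    | (obtain ⟨ε, h0, lam', hl, hp⟩ := key _ n1
       refine ⟨lam', hl, (generic_iff hl hm).2 ?_⟩
       rw [hp, hp, hp, if_pos rfl, if_neg d1.symm, if_neg d2.symm]
       exact Or.inl ⟨by linarith, by linarith⟩)
    | (obtain ⟨ε, h0, lam', hl, hp⟩ := key _ n2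
       refine ⟨lam', hl, (generic_iff hl hm).2 ?_⟩
       rw [hp, hp, hp, if_pos rfl, if_neg d1, if_neg d3.symm]
       exact Or.inr (Or.inl ⟨by linarith, by linarith⟩))
    | (obtain ⟨ε, h0, lam', hl, hp⟩ := key _ n3
       refine ⟨lam', hl, (generic_iff hl hm).2 ?_⟩
       rw [hp, hp, hp, if_pos rfl, if_neg d2, if_neg d3]
       exact Or.inr (Or.inr ⟨by linarith, by linarith⟩))

/-! ## Existence of the motif -/

def ncr (ms : List Tri) (t : Tri) : Bool := ms.all fun u => !crossT t u

lemma Good.ncr {T lam} (h : Good T lam) {ms : List Tri} (hms : ∀ u ∈ ms, triS u ∈ T) {t : Tri}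
    (ht : triS t ∈ T) : ncr ms t = true := by
  simp only [_root_.ncr, List.all_eq_true]
  intro u hu
  rw [h.not_crossT ht (hms u hu)]; rfl

def sameS (t u : Tri) : Bool :=
  let m := fun p : ℤ × ℤ => decide (p = u.1) || (decide (p = u.2.1) || decide (p = u.2.2))
  m t.1 && (m t.2.1 && m t.2.2)

lemma sameS_eq {t u : Tri} (ht : triO t = 1) (hu : triO u = 1) (h : sameS t u = true) :
    triS t = triS u := by
  apply Finset.eq_of_subset_of_card_le
  · intro p hp
    simp only [sameS, Bool.and_eq_true, Bool.or_eq_true, decide_eq_true_eq] at h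
    simp only [triS, Finset.mem_insert, Finset.mem_singleton] at hp ⊢
    rcases hp with rfl | rfl | rfl <;> tauto
  · rw [card_triS ht, card_triS hu]

def ix : List ℤ := [0, 1, 2, 3, 4]

lemma Good.ex_side {T lam} (h : Good T lam) (hc : triS cen ∈ T) (X : ℤ × ℤ)
    (hX : 0 ≤ X.1 ∧ 0 ≤ X.2 ∧ X.1 + X.2 ≤ 240) (f : ℤ → Tri) (hf : ∀ i, triO (f i) = 1)
    (hd : (Lst.all fun t => !(cont t X && _root_.ncr [cen] t) || ix.any fun i => sameS t (f i)) = true) :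
    ∃ i ∈ ix, triS (f i) ∈ T := by
  obtain ⟨t, ht, hT, hX⟩ := h.cover X hX
  have h1 := List.all_eq_true.1 hd t ht
  rw [h.ncr (ms := [cen]) (by simpa using hc) hT, hX] at h1
  simp only [Bool.and_self, Bool.not_true, Bool.false_or, List.any_eq_true] at h1
  obtain ⟨i, hi, h2⟩ := h1
  exact ⟨i, hi, by rw [← sameS_eq (triO_of_Lst ht) (hf i) h2]; exact hT⟩

lemma Good.ex_motif {T lam} (h : Good T lam) (hc : triS cen ∈ T) :
    ∃ i ∈ ix, ∃ j ∈ ix, ∃ k ∈ ix, Motif T i j k := by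
  obtain ⟨i, hi, h1⟩ := h.ex_side hc (59, 90) (by decide) t1 triO_t1 (by decide +kernel)
  obtain ⟨j, hj, h2⟩ := h.ex_side hc (90, 59) (by decide) t2 triO_t2 (by decide +kernel)
  obtain ⟨k, hk, h3⟩ := h.ex_side hc (91, 91) (by decide) t3 triO_t3 (by decide +kernel)
  exact ⟨i, hi, j, hj, k, hk, hc, h1, h2, h3⟩

/-! ## Folding -/

def ellZ (g : ℤ × ℤ → ℤ) (t : Tri) (p : ℤ × ℤ) : ℤ :=
  g t.1 * ori t.2.1 t.2.2 p + g t.2.1 * ori t.2.2 t.1 p + g t.2.2 * ori t.1 t.2.1 p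

lemma ellZ_cast (g : ℤ × ℤ → ℤ) (t : Tri) (p : ℤ × ℤ) :
    ((ellZ g t p : ℤ) : ℝ) = ell (fun q => (g q : ℝ)) t p := by
  simp only [ellZ, ell]; push_cast; ring

def hNZ (g : ℤ × ℤ → ℤ) (p : ℤ × ℤ) : ℤ := ellZ g cen p - g p

def hasE (t : Tri) (e : (ℤ × ℤ) × (ℤ × ℤ)) : Bool :=
  let m := fun p : ℤ × ℤ => decide (p = t.1) || (decide (p = t.2.1) || decide (p = t.2.2))
  m e.1 && m e.2

lemma hasE_edge {T : Finset (Finset (ℤ × ℤ))} {t : Tri} (ht : triS t ∈ T)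
    {e : (ℤ × ℤ) × (ℤ × ℤ)} (h : hasE t e = true) : EdgeIn T e := by
  simp only [hasE, Bool.and_eq_true, Bool.or_eq_true, decide_eq_true_eq] at h
  refine ⟨_, ht, ?_, ?_⟩ <;> simp only [triS, Finset.mem_insert, Finset.mem_singleton] <;> tauto

abbrev Opt := ((ℤ × ℤ) × (ℤ × ℤ)) × (ℤ × ℤ × ℤ)

/-- integer affine form -/
def aff (c : ℤ × ℤ × ℤ) (p : ℤ × ℤ) : ℤ := c.1 + c.2.1 * p.1 + c.2.2 * p.2

def imin (a b : ℤ) : ℤ := bif decide (a ≤ b) then a else b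

def fld (c0 : (ℤ × ℤ × ℤ) × (ℤ × ℤ × ℤ)) (c1 c2 : ℤ × ℤ × ℤ) (p : ℤ × ℤ) : ℤ :=
  imin 0 (imin (aff c0.1 p) (imin (aff c0.2 p) (imin (aff c1 p) (aff c2 p))))

lemma Good.opt {T lam} (h : Good T lam) {ms : List Tri} (hms : ∀ u ∈ ms, triS u ∈ T) (X : ℤ × ℤ)
    (hX : 0 ≤ X.1 ∧ 0 ≤ X.2 ∧ X.1 + X.2 ≤ 240) (os : List Opt)
    (hd : (Lst.all fun t => !(cont t X && _root_.ncr ms t) || os.any fun o => hasE t o.1) = true) :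
    ∃ o ∈ os, EdgeIn T o.1 := by
  obtain ⟨t, ht, hT, hX⟩ := h.cover X hX
  have h1 := List.all_eq_true.1 hd t ht
  rw [h.ncr hms hT, hX] at h1
  simp only [Bool.and_self, Bool.not_true, Bool.false_or, List.any_eq_true] at h1
  obtain ⟨o, ho, h2⟩ := h1
  exact ⟨o, ho, hasE_edge hT h2⟩

def frms (c0 : (ℤ × ℤ × ℤ) × (ℤ × ℤ × ℤ)) (c1 c2 : ℤ × ℤ × ℤ) : List (ℤ × ℤ × ℤ) :=
  [(0, 0, 0), c0.1, c0.2, c1, c2]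

/-- `t` lies in a domain of linearity of the minimum of the forms `fs` -/
def inDom (fs : List (ℤ × ℤ × ℤ)) (t : Tri) : Bool :=
  fs.any fun f => fs.all fun f' => decide (aff f t.1 ≤ aff f' t.1) &&
    (decide (aff f t.2.1 ≤ aff f' t.2.1) && decide (aff f t.2.2 ≤ aff f' t.2.2))

lemma imin_eq (a b : ℤ) : imin a b = min a b := by
  unfold imin
  by_cases h : a ≤ b
  · simp [h]
  · simp [h, (not_le.1 h).le]

lemma fld_le {c0 c1 c2} {f : ℤ × ℤ × ℤ} (hf : f ∈ frms c0 c1 c2) (p : ℤ × ℤ) :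
    fld c0 c1 c2 p ≤ aff f p := by
  simp only [frms, List.mem_cons, List.not_mem_nil, or_false] at hf
  simp only [fld, imin_eq]
  rcases hf with rfl | rfl | rfl | rfl | rfl
  · simp [aff]
  all_goals simp

lemma le_fld {c0 c1 c2} {p : ℤ × ℤ} {m : ℤ} (h : ∀ f ∈ frms c0 c1 c2, m ≤ aff f p) :
    m ≤ fld c0 c1 c2 p := by
  have h0 := h (0, 0, 0) (by simp [frms])
  simp only [fld, imin_eq, le_min_iff]
  refine ⟨by simpa [aff] using h0, h _ ?_, h _ ?_, h _ ?_, h _ ?_⟩ <;> simp [frms]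

lemma inDom_spec {c0 c1 c2} {t : Tri} (ht : triO t = 1) (h : inDom (frms c0 c1 c2) t = true)
    (p : ℤ × ℤ) : fld c0 c1 c2 p ≤ ellZ (fld c0 c1 c2) t p := by
  simp only [inDom, List.any_eq_true, List.all_eq_true, Bool.and_eq_true, decide_eq_true_eq] at h
  obtain ⟨f, hf, h⟩ := h
  have e1 := le_antisymm (fld_le hf t.1) (le_fld fun f' hf' => (h f' hf').1)
  have e2 := le_antisymm (fld_le hf t.2.1) (le_fld fun f' hf' => (h f' hf').2.1)
  have e3 := le_antisymm (fld_le hf t.2.2) (le_fld fun f' hf' => (h f' hf').2.2)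
  refine (fld_le hf p).trans (le_of_eq ?_)
  rw [ellZ, e1, e2, e3]
  obtain ⟨a, b, c⟩ := t
  simp only [aff, triO, ori] at *
  linear_combination (-(f.1 + f.2.1 * p.1 + f.2.2 * p.2)) * ht

def fchk (ms : List Tri) (c0 : (ℤ × ℤ × ℤ) × (ℤ × ℤ × ℤ)) (P : (ℤ × ℤ → ℤ) → Bool)
    (o1 o2 : Opt) : Bool :=
  P (fld c0 o1.2 o2.2) && Lst.all fun t => inDom (frms c0 o1.2 o2.2) t ||
    !(!crossTE t o1.1 && (!crossTE t o2.1 && ncr ms t))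

lemma Good.fold {T lam} (h : Good T lam) {ms : List Tri} (hms : ∀ u ∈ ms, triS u ∈ T)
    {X Y : ℤ × ℤ} (hX : 0 ≤ X.1 ∧ 0 ≤ X.2 ∧ X.1 + X.2 ≤ 240)
    (hY : 0 ≤ Y.1 ∧ 0 ≤ Y.2 ∧ Y.1 + Y.2 ≤ 240) (os us : List Opt)
    (c0 : (ℤ × ℤ × ℤ) × (ℤ × ℤ × ℤ))
    (P : (ℤ × ℤ → ℤ) → Bool)
    (hd1 : (Lst.all fun t => !(cont t X && _root_.ncr ms t) || os.any fun o => hasE t o.1) = true)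
    (hd2 : (Lst.all fun t => !(cont t Y && _root_.ncr ms t) || us.any fun o => hasE t o.1) = true)
    (hd3 : (os.all fun o => us.all fun u => fchk ms c0 P o u) = true) :
    ∃ g : ℤ × ℤ → ℤ, P g = true ∧ ∀ s : ℝ, 0 ≤ s → Good T (fun p => lam p + s * g p) := by
  obtain ⟨o, ho, e1⟩ := h.opt hms X hX os hd1
  obtain ⟨u, hu, e2⟩ := h.opt hms Y hY us hd2
  have h3 := List.all_eq_true.1 (List.all_eq_true.1 hd3 o ho) u hu
  simp only [fchk, Bool.and_eq_true] at h3
  refine ⟨_, h3.1, fun s hs => h.shift (fun p => (fld c0 o.2 u.2 p : ℝ)) ?_ s hs⟩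
  intro t ht hT p hp
  have h4 := List.all_eq_true.1 h3.2 t ht
  rw [h.ncr hms hT, h.not_crossTE hT e1, h.not_crossTE hT e2] at h4
  simp only [Bool.not_false, Bool.and_self, Bool.not_true, Bool.or_false] at h4
  have h5 := inDom_spec (triO_of_Lst ht) h4 p
  rw [← ellZ_cast]
  exact_mod_cast h5

lemma shift_hN (lam : ℤ × ℤ → ℝ) (g : ℤ × ℤ → ℤ) (s : ℝ) (p : ℤ × ℤ) :
    hN (fun p => lam p + s * g p) p = hN lam p + s * (hNZ g p : ℤ) := by
  rw [hN_add]
  congr 2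
  simp only [hN, hNZ]
  push_cast
  rw [ellZ_cast]

/-- `hN` at `q` can be raised above `hN` at `r` -/
lemma raise {T : Finset (Finset (ℤ × ℤ))} {lam : ℤ × ℤ → ℝ} {g : ℤ × ℤ → ℤ} {q r : ℤ × ℤ}
    (hP : (decide (hNZ g q = 3) && decide (hNZ g r = 0)) = true)
    (hg : ∀ s : ℝ, 0 ≤ s → Good T (fun p => lam p + s * g p)) :
    ∃ lam', Good T lam' ∧ hN lam' r < hN lam' q := by
  simp only [Bool.and_eq_true, decide_eq_true_eq] at hP
  refine ⟨_, hg (|hN lam r - hN lam q| + 1) (by positivity), ?_⟩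
  rw [shift_hN, shift_hN, hP.1, hP.2]
  have := le_abs_self (hN lam r - hN lam q)
  have := abs_nonneg (hN lam r - hN lam q)
  push_cast
  linarith

/-- forms vanishing on the two sides of the third motif triangle -/
def fL (k : ℤ) : ℤ × ℤ × ℤ := (9 * k - 12, 6 - 3 * k, 3 - 3 * k)
def fR (k : ℤ) : ℤ × ℤ × ℤ := (24 - 9 * k, 3 * k - 9, 3 * k - 6)
def fB (c : ℤ × ℤ × ℤ) : ℤ × ℤ × ℤ := (c.1 + 4 * c.2.1, -c.2.1, c.2.2 - c.2.1)
def fC (c : ℤ × ℤ × ℤ) : ℤ × ℤ × ℤ := (c.1 + 4 * c.2.2, c.2.1 - c.2.2, -c.2.2)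

lemma raiseA {T lam k} (h : Good T lam) (hm : Motif T 0 0 k) (hk : k = 1 ∨ k = 2 ∨ k = 3) :
    ∃ lam', Good T lam' ∧ hN lam' (k, 4 - k) < hN lam' (0, 0) := by
  obtain ⟨m0, m1, m2, m3⟩ := hm
  have hms : ∀ u ∈ [cen, t1 0, t2 0, t3 k], triS u ∈ T := by simp [m0, m1, m2, m3]
  have : ∃ g : ℤ × ℤ → ℤ, (decide (hNZ g (0, 0) = 3) && decide (hNZ g (k, 4 - k) = 0)) = true ∧
      ∀ s : ℝ, 0 ≤ s → Good T (fun p => lam p + s * g p) := by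
    refine h.fold hms (X := (59, 123)) (Y := (123, 59)) (by decide) (by decide)
      [(((1, 2), (1, 3)), (-3, 3, 0)), (((1, 2), (0, 3)), fL k)]
      [(((2, 1), (3, 1)), (-3, 0, 3)), (((2, 1), (3, 0)), fR k)] ((-3, 3, 0), (-3, 0, 3))
      (fun g => decide (hNZ g (0, 0) = 3) && decide (hNZ g (k, 4 - k) = 0)) ?_ ?_ ?_
    all_goals rcases hk with rfl | rfl | rfl <;> decide +kernel
  obtain ⟨g, h1, h2⟩ := this
  exact raise h1 h2

lemma raiseB {T lam i} (h : Good T lam) (hm : Motif T i 4 4) (hi : i = 1 ∨ i = 2 ∨ i = 3) :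
    ∃ lam', Good T lam' ∧ hN lam' (0, i) < hN lam' (4, 0) := by
  obtain ⟨m0, m1, m2, m3⟩ := hm
  have hms : ∀ u ∈ [cen, t1 i, t2 4, t3 4], triS u ∈ T := by simp [m0, m1, m2, m3]
  have : ∃ g : ℤ × ℤ → ℤ, (decide (hNZ g (4, 0) = 3) && decide (hNZ g (0, i) = 0)) = true ∧
      ∀ s : ℝ, 0 ≤ s → Good T (fun p => lam p + s * g p) := by
    refine h.fold hms (X := (58, 123)) (Y := (58, 59)) (by decide) (by decide)
      [(((1, 2), (0, 3)), fB (-3, 3, 0)), (((1, 2), (1, 3)), fB (fL (4 - i)))]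
      [(((1, 1), (0, 1)), fB (-3, 0, 3)), (((1, 1), (1, 0)), fB (fR (4 - i)))]
      (fB (-3, 3, 0), fB (-3, 0, 3))
      (fun g => decide (hNZ g (4, 0) = 3) && decide (hNZ g (0, i) = 0)) ?_ ?_ ?_
    all_goals rcases hi with rfl | rfl | rfl <;> decide +kernel
  obtain ⟨g, h1, h2⟩ := this
  exact raise h1 h2

lemma raiseC {T lam j} (h : Good T lam) (hm : Motif T 4 j 0) (hj : j = 1 ∨ j = 2 ∨ j = 3) :
    ∃ lam', Good T lam' ∧ hN lam' (j, 0) < hN lam' (0, 4) := by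
  obtain ⟨m0, m1, m2, m3⟩ := hm
  have hms : ∀ u ∈ [cen, t1 4, t2 j, t3 0], triS u ∈ T := by simp [m0, m1, m2, m3]
  have : ∃ g : ℤ × ℤ → ℤ, (decide (hNZ g (0, 4) = 3) && decide (hNZ g (j, 0) = 0)) = true ∧
      ∀ s : ℝ, 0 ≤ s → Good T (fun p => lam p + s * g p) := by
    refine h.fold hms (X := (59, 58)) (Y := (123, 58)) (by decide) (by decide)
      [(((1, 1), (1, 0)), fC (-3, 3, 0)), (((1, 1), (0, 1)), fC (fL j))]
      [(((2, 1), (3, 0)), fC (-3, 0, 3)), (((2, 1), (3, 1)), fC (fR j))]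
      (fC (-3, 3, 0), fC (-3, 0, 3))
      (fun g => decide (hNZ g (0, 4) = 3) && decide (hNZ g (j, 0) = 0)) ?_ ?_ ?_
    all_goals rcases hj with rfl | rfl | rfl <;> decide +kernel
  obtain ⟨g, h1, h2⟩ := this
  exact raise h1 h2

def six : List (ℤ × ℤ × ℤ) :=
  [(0, 0, 4), (0, 0, 0), (0, 4, 4), (4, 4, 4), (4, 0, 0), (4, 4, 0)]

lemma exists_generic {T lam i j k} (h : Good T lam) (hm : Motif T i j k) (hi : i ∈ ix)
    (hj : j ∈ ix) (hk : k ∈ ix) (hs : (i, j, k) ∉ six) :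
    ∃ lam', Good T lam' ∧ SatisfiesGenericityI lam' := by
  have hb : ∀ i ∈ ix, 0 ≤ i ∧ i ≤ 4 := by decide
  have bi := hb i hi
  have bj := hb j hj
  have bk := hb k hk
  simp only [six, List.mem_cons, Prod.mk.injEq, List.not_mem_nil, or_false, not_or] at hs
  by_cases c1 : i = 0 ∧ j = 0
  · obtain ⟨rfl, rfl⟩ := c1
    obtain ⟨l, hl, hlt⟩ := raiseA h hm (by omega)
    exact ⟨l, hl, (generic_iff hl hm).2 (Or.inr (Or.inr ⟨hlt, hlt⟩))⟩
  by_cases c2 : j = 4 ∧ k = 4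
  · obtain ⟨rfl, rfl⟩ := c2
    obtain ⟨l, hl, hlt⟩ := raiseB h hm (by omega)
    exact ⟨l, hl, (generic_iff hl hm).2 (Or.inl ⟨hlt, hlt⟩)⟩
  by_cases c3 : i = 4 ∧ k = 0
  · obtain ⟨rfl, rfl⟩ := c3
    obtain ⟨l, hl, hlt⟩ := raiseC h hm (by omega)
    exact ⟨l, hl, (generic_iff hl hm).2 (Or.inr (Or.inl ⟨hlt, hlt⟩))⟩
  apply generic_of_distinct h hm <;> rw [Ne, Prod.mk.injEq] <;> omega

lemma nongeneric_six {T lam i j k} (h : Good T lam) (hm : Motif T i j k) (hs : (i, j, k) ∈ six) :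
    ¬ SatisfiesGenericityI lam := by
  rw [generic_iff h hm]
  have s1 := fun p => @hN_min1 lam i (h.strict (triO_t1 i) hm.2.1) p
  have s2 := fun p => @hN_min2 lam j (h.strict (triO_t2 j) hm.2.2.1) p
  have s3 := fun p => @hN_min3 lam k (h.strict (triO_t3 k) hm.2.2.2) p
  have a1 := s1 (0, 0) (by decide) rfl
  have a2 := s1 (0, 4) (by decide) rfl
  have b1 := s2 (0, 0) (by decide) rfl
  have b2 := s2 (4, 0) (by decide) rfl
  have c1 := s3 (4, 0) (by decide) rfl
  have c2 := s3 (0, 4) (by decide) rfl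
  clear s1 s2 s3
  simp only [six, List.mem_cons, Prod.mk.injEq, List.not_mem_nil, or_false] at hs
  unfold UniqueShortest
  rcases hs with ⟨rfl, rfl, rfl⟩ | ⟨rfl, rfl, rfl⟩ | ⟨rfl, rfl, rfl⟩ | ⟨rfl, rfl, rfl⟩ |
    ⟨rfl, rfl, rfl⟩ | ⟨rfl, rfl, rfl⟩ <;> norm_num at * <;>
    grind

theorem nongeneric_iff {T lam} (h : Good T lam) :
    (∀ lam', Induces lam' T → ¬ SatisfiesGenericityI lam') ↔
      ∃ x ∈ six, Motif T x.1 x.2.1 x.2.2 := by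
  constructor
  · intro hn
    by_cases hc : triS cen ∈ T
    · obtain ⟨i, hi, j, hj, k, hk, hm⟩ := h.ex_motif hc
      refine ⟨(i, j, k), ?_, hm⟩
      by_contra hs
      obtain ⟨l, hl, hg⟩ := exists_generic h hm hi hj hk hs
      exact hn l hl.2 hg
    · exact absurd (generic_of_not_cen h hc) (hn lam h.2)
  · rintro ⟨⟨i, j, k⟩, hs, hm⟩ l hl
    exact nongeneric_six ⟨h.1, hl⟩ hm hs

/-! ## Affine symmetries -/

abbrev Aff := (ℤ × ℤ × ℤ) × (ℤ × ℤ × ℤ)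

def apA (A : Aff) (p : ℤ × ℤ) : ℤ × ℤ := (aff A.1 p, aff A.2 p)

structure IsSym (A B : Aff) : Prop where
  h1 : ∀ p, apA A (apA B p) = p
  h2 : ∀ p, apA B (apA A p) = p
  h3 : ∀ p, p ∈ latticePts → apA A p ∈ latticePts
  h4 : ∀ p, p ∈ latticePts → apA B p ∈ latticePts
  h5 : (A.1.2.1 * A.2.2.2 - A.1.2.2 * A.2.2.1).natAbs = 1

lemma IsSym.inj {A B : Aff} (h : IsSym A B) : Function.Injective (apA A) :=
  Function.LeftInverse.injective h.h2

def actA (A : Aff) (T : Finset (Finset (ℤ × ℤ))) : Finset (Finset (ℤ × ℤ)) :=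
  T.image fun σ => σ.image (apA A)

lemma IsSym.argmax {A B : Aff} (h : IsSym A B) {lam : ℤ × ℤ → ℝ} {w : ℝ × ℝ}
    {σ : Finset (ℤ × ℤ)} (hw : IsArgmax lam w σ) :
    ∃ w', IsArgmax (fun p => lam (apA B p)) w' (σ.image (apA A)) := by
  refine ⟨(w.1 * B.1.2.1 + w.2 * B.2.2.1, w.1 * B.1.2.2 + w.2 * B.2.2.2), ?_⟩
  have key : ∀ q, mval (fun p => lam (apA B p)) q
      (w.1 * B.1.2.1 + w.2 * B.2.2.1, w.1 * B.1.2.2 + w.2 * B.2.2.2) =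
      mval lam (apA B q) w - (w.1 * B.1.1 + w.2 * B.2.1) := by
    intro q
    simp only [mval, apA, aff]; push_cast; ring
  intro q
  rw [Finset.mem_image]
  constructor
  · rintro ⟨p, hp, rfl⟩
    obtain ⟨h1, h2⟩ := (hw p).1 hp
    refine ⟨h.h3 p h1, fun r hr => ?_⟩
    rw [key, key, h.h2]
    linarith [h2 _ (h.h4 r hr)]
  · rintro ⟨h1, h2⟩
    refine ⟨apA B q, (hw _).2 ⟨h.h4 q h1, fun r hr => ?_⟩, h.h1 q⟩
    have := h2 _ (h.h3 r hr)
    rw [key, key, h.h2] at this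
    linarith

lemma rhull_map (A : Aff) {B : Aff} (h : IsSym A B) {σ : Finset (ℤ × ℤ)} {x : ℝ × ℝ}
    (hx : x ∈ rhull σ) :
    ((A.1.1 : ℝ) + A.1.2.1 * x.1 + A.1.2.2 * x.2, (A.2.1 : ℝ) + A.2.2.1 * x.1 + A.2.2.2 * x.2) ∈
      rhull (σ.image (apA A)) := by
  obtain ⟨c, c0, c1, c2, c3⟩ := mem_rhull.1 hx
  rw [mem_rhull]
  refine ⟨fun q => c (apA B q), ?_, ?_, ?_, ?_⟩
  · intro q hq
    obtain ⟨p, hp, rfl⟩ := Finset.mem_image.1 hq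
    dsimp only
    rw [h.h2]; exact c0 p hp
  · rw [Finset.sum_image h.inj.injOn]
    simpa only [h.h2] using c1
  · rw [Finset.sum_image h.inj.injOn]
    simp only [h.h2, ← c2, ← c3]
    simp only [apA, aff]
    push_cast
    simp only [mul_add, Finset.sum_add_distrib, Finset.mul_sum, ← Finset.sum_mul, c1]
    simp only [one_mul]
    congr 1
    · congr 1
      exact Finset.sum_congr rfl fun _ _ => by ring
    · exact Finset.sum_congr rfl fun _ _ => by ring
  · rw [Finset.sum_image h.inj.injOn]
    simp only [h.h2, ← c2, ← c3]
    simp only [apA, aff]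
    push_cast
    simp only [mul_add, Finset.sum_add_distrib, Finset.mul_sum, ← Finset.sum_mul, c1]
    simp only [one_mul]
    congr 1
    · congr 1
      exact Finset.sum_congr rfl fun _ _ => by ring
    · exact Finset.sum_congr rfl fun _ _ => by ring

lemma good_mk {T : Finset (Finset (ℤ × ℤ))} {lam : ℤ × ℤ → ℝ}
    (h1 : ∀ σ ∈ T, σ ⊆ latticePts ∧ IsUnimodularTriangle σ)
    (h2 : rhull latticePts ⊆ ⋃ σ ∈ T, rhull σ)
    (h3 : ∀ σ ∈ T, ∃ w, IsArgmax lam w σ) : Good T lam := by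
  have hU : (⋃ σ ∈ T, rhull σ) = rhull latticePts :=
    Set.Subset.antisymm (Set.iUnion₂_subset fun σ hσ => rhull_mono (h1 σ hσ).1) h2
  refine ⟨⟨h1, hU, ?_⟩, induces_of_argmax hU ?_ h3⟩
  · intro σ hσ τ hτ
    obtain ⟨w, hw⟩ := h3 σ hσ
    obtain ⟨w', hw'⟩ := h3 τ hτ
    exact face_to_face hw hw'
  · intro σ hσ
    obtain ⟨t, ht, rfl⟩ := exists_Lst (h1 σ hσ).1 (h1 σ hσ).2
    exact card_triS (triO_of_Lst ht)

lemma Good.map {T lam} (h : Good T lam) {A B : Aff} (hs : IsSym A B) (hs' : IsSym B A) :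
    Good (actA A T) (fun p => lam (apA B p)) := by
  apply good_mk
  · intro σ hσ
    obtain ⟨τ, hτ, rfl⟩ := Finset.mem_image.1 hσ
    obtain ⟨h1, a, b, c, rfl, h2⟩ := h.1.1 τ hτ
    refine ⟨?_, apA A a, apA A b, apA A c, by simp [Finset.image_insert], ?_⟩
    · intro q hq
      obtain ⟨p, hp, rfl⟩ := Finset.mem_image.1 hq
      exact hs.h3 p (h1 hp)
    · have : ((apA A b).1 - (apA A a).1) * ((apA A c).2 - (apA A a).2) -
          ((apA A b).2 - (apA A a).2) * ((apA A c).1 - (apA A a).1) =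
          (A.1.2.1 * A.2.2.2 - A.1.2.2 * A.2.2.1) *
          ((b.1 - a.1) * (c.2 - a.2) - (b.2 - a.2) * (c.1 - a.1)) := by
        simp only [apA, aff]; ring
      rw [this, Int.natAbs_mul, hs.h5, h2]
  · intro x hx
    have hy := rhull_map B hs' hx
    have hy' := rhull_mono (τ := latticePts) (fun q hq => by
      obtain ⟨p, hp, rfl⟩ := Finset.mem_image.1 hq
      exact hs.h4 p hp) hy
    rw [← h.1.2.1] at hy'
    simp only [Set.mem_iUnion] at hy' ⊢
    obtain ⟨σ, hσ, hy'⟩ := hy'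
    refine ⟨_, Finset.mem_image_of_mem _ hσ, ?_⟩
    have hz := rhull_map A hs hy'
    have e0 := hs.h1 (0, 0)
    have e1 := hs.h1 (1, 0)
    have e2 := hs.h1 (0, 1)
    simp only [apA, aff, Prod.mk.injEq] at e0 e1 e2
    have f01 := congrArg (Int.cast : ℤ → ℝ) e0.1
    have f02 := congrArg (Int.cast : ℤ → ℝ) e0.2
    have f11 := congrArg (Int.cast : ℤ → ℝ) e1.1
    have f12 := congrArg (Int.cast : ℤ → ℝ) e1.2
    have f21 := congrArg (Int.cast : ℤ → ℝ) e2.1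
    have f22 := congrArg (Int.cast : ℤ → ℝ) e2.2
    push_cast at f01 f02 f11 f12 f21 f22
    convert hz using 1
    ext
    · dsimp only
      linear_combination (-(1 - x.1 - x.2)) * f01 - x.1 * f11 - x.2 * f21
    · dsimp only
      linear_combination (-(1 - x.1 - x.2)) * f02 - x.1 * f12 - x.2 * f22
  · intro σ hσ
    obtain ⟨τ, hτ, rfl⟩ := Finset.mem_image.1 hσ
    obtain ⟨w, hw⟩ := ((h.2 τ).1 hτ).2
    exact hs.argmax hw

/-! ## Certifying the representatives -/

def rot (t : Tri) : Tri := (t.2.1, t.2.2, t.1)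

lemma triS_rot (t : Tri) : triS (rot t) = triS t := by
  ext p; simp only [triS, rot, Finset.mem_insert, Finset.mem_singleton]; tauto

lemma triO_rot (t : Tri) : triO (rot t) = triO t := by simp only [triO, rot, ori]; ring

def ellR (lam : ℤ × ℤ → ℝ) (t : Tri) (x : ℝ × ℝ) : ℝ :=
  lam t.1 * oriR t.2.1 t.2.2 x + lam t.2.1 * oriR t.2.2 t.1 x + lam t.2.2 * oriR t.1 t.2.1 x

lemma ellR_rot (lam : ℤ × ℤ → ℝ) (t : Tri) (x : ℝ × ℝ) : ellR lam (rot t) x = ellR lam t x := by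
  simp only [ellR, rot]; ring

lemma ellR_interp (lam : ℤ × ℤ → ℝ) (t u : Tri) (hu : triO u = 1) (x : ℝ × ℝ) :
    ellR lam t x = ell lam t u.1 * oriR u.2.1 u.2.2 x + ell lam t u.2.1 * oriR u.2.2 u.1 x +
      ell lam t u.2.2 * oriR u.1 u.2.1 x := by
  obtain ⟨a, b, c⟩ := t
  obtain ⟨d, e, f⟩ := u
  have h1 := triO_real hu
  simp only [ellR, ell, oriR, ori]
  push_cast
  linear_combination (-(lam a * (((c.1 : ℝ) - b.1) * (x.2 - b.2) - ((c.2 : ℝ) - b.2) * (x.1 - b.1)) +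
    lam b * (((a.1 : ℝ) - c.1) * (x.2 - c.2) - ((a.2 : ℝ) - c.2) * (x.1 - c.1)) +
    lam c * (((b.1 : ℝ) - a.1) * (x.2 - a.2) - ((b.2 : ℝ) - a.2) * (x.1 - a.1)))) * h1

def memT (p : ℤ × ℤ) (t : Tri) : Bool :=
  decide (p = t.1) || (decide (p = t.2.1) || decide (p = t.2.2))

lemma memT_iff {p : ℤ × ℤ} {t : Tri} : memT p t = true ↔ p ∈ triS t := by
  simp only [memT, Bool.or_eq_true, decide_eq_true_eq, triS, Finset.mem_insert,
    Finset.mem_singleton]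

def nb (t : Tri) (a b : ℤ × ℤ) (v : Tri) : Bool :=
  decide (v.1 = b) && (decide (v.2.1 = a) && !memT v.2.2 t)

lemma nb_lt {lam : ℤ × ℤ → ℝ} {t v : Tri} {a b : ℤ × ℤ} (ht : triO t = 1) (hv : triO v = 1)
    (hvl : triS v ⊆ latticePts) (hS : Strict lam t) (ha : a ∈ triS t) (hb : b ∈ triS t)
    (h : nb t a b v = true) {x : ℝ × ℝ} (hx : oriR a b x < 0) : ellR lam v x < ellR lam t x := by
  obtain ⟨b', a', d⟩ := v
  simp only [nb, Bool.and_eq_true, decide_eq_true_eq, Bool.not_eq_true'] at h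
  obtain ⟨rfl, rfl, h3⟩ := h
  have hd : d ∉ triS t := by rw [← memT_iff, h3]; decide
  have h4 := hS d (hvl (by simp [triS])) hd
  rw [ellR_interp lam t _ hv x]
  simp only
  rw [ell_vert lam t ht _ ha, ell_vert lam t ht _ hb]
  simp only [ellR]
  have : 0 < oriR b' a' x := by
    have : oriR b' a' x = - oriR a' b' x := by simp only [oriR]; ring
    linarith
  have := mul_lt_mul_of_pos_right h4 this
  linarith

def bd (a b : ℤ × ℤ) : Bool :=
  decide (0 ≤ ori a b (0, 0)) && (decide (0 ≤ ori a b (4, 0)) && decide (0 ≤ ori a b (0, 4)))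

lemma bd_spec {a b : ℤ × ℤ} (h : bd a b = true) {x : ℝ × ℝ} (hx : x ∈ rhull latticePts) :
    0 ≤ oriR a b x := by
  obtain ⟨x1, x2, x3⟩ := mem_rhull_lattice.1 hx
  simp only [bd, Bool.and_eq_true, decide_eq_true_eq] at h
  obtain ⟨h1, h2, h3⟩ := h
  have g1 : (0 : ℝ) ≤ (ori a b (0, 0) : ℤ) := by exact_mod_cast h1
  have g2 : (0 : ℝ) ≤ (ori a b (4, 0) : ℤ) := by exact_mod_cast h2
  have g3 : (0 : ℝ) ≤ (ori a b (0, 4) : ℤ) := by exact_mod_cast h3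
  have k1 := mul_nonneg (by linarith : (0 : ℝ) ≤ 4 - x.1 - x.2) g1
  have k2 := mul_nonneg x1 g2
  have k3 := mul_nonneg x2 g3
  have : 4 * oriR a b x = (4 - x.1 - x.2) * (ori a b (0, 0) : ℤ) + x.1 * (ori a b (4, 0) : ℤ) +
      x.2 * (ori a b (0, 4) : ℤ) := by
    simp only [oriR, ori]; push_cast; ring
  linarith

def edgeOk (l : List Tri) (t : Tri) (a b : ℤ × ℤ) : Bool :=
  bd a b || l.any fun u => nb t a b u || (nb t a b (rot u) || nb t a b (rot (rot u)))

def triOk (l : List Tri) (f : ℤ × ℤ → ℤ) (t : Tri) : Bool :=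
  decide (t ∈ Lst) && ((pts.all fun p => memT p t || decide (f p < ellZ f t p)) &&
    (edgeOk l t t.1 t.2.1 && (edgeOk l t t.2.1 t.2.2 && edgeOk l t t.2.2 t.1)))

def toT (l : List Tri) : Finset (Finset (ℤ × ℤ)) := (l.map triS).toFinset

lemma mem_toT {l : List Tri} {σ : Finset (ℤ × ℤ)} : σ ∈ toT l ↔ ∃ t ∈ l, triS t = σ := by
  simp [toT]

lemma edgeOk_spec {l : List Tri} {lam : ℤ × ℤ → ℝ} {t : Tri} {a b : ℤ × ℤ} (ht : triO t = 1)
    (hl : ∀ u ∈ l, u ∈ Lst) (hS : Strict lam t) (ha : a ∈ triS t) (hb : b ∈ triS t)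
    (h : edgeOk l t a b = true) {x : ℝ × ℝ} (hx : x ∈ rhull latticePts)
    (hmin : ∀ u ∈ l, ellR lam t x ≤ ellR lam u x) : 0 ≤ oriR a b x := by
  simp only [edgeOk, Bool.or_eq_true, List.any_eq_true] at h
  rcases h with h | ⟨u, hu, h⟩
  · exact bd_spec h hx
  · by_contra hneg
    rw [not_le] at hneg
    have h0 := hmin u hu
    have o := triO_of_Lst (hl u hu)
    have s := triS_sub_of_Lst (hl u hu)
    rcases h with h | h | h
    · have := nb_lt ht o s hS ha hb h hneg
      linarith
    · have := nb_lt ht ((triO_rot u).trans o) (by rwa [triS_rot]) hS ha hb h hneg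
      rw [ellR_rot] at this
      linarith
    · have := nb_lt ht ((triO_rot _).trans ((triO_rot u).trans o)) (by rwa [triS_rot, triS_rot])
        hS ha hb h hneg
      rw [ellR_rot, ellR_rot] at this
      linarith

lemma good_toT {l : List Tri} {f : ℤ × ℤ → ℤ} (hne : l ≠ []) (h : (l.all fun t => triOk l f t) = true) :
    Good (toT l) (fun p => (f p : ℝ)) := by
  simp only [List.all_eq_true, triOk, Bool.and_eq_true, decide_eq_true_eq, Bool.or_eq_true] at h
  have hl : ∀ u ∈ l, u ∈ Lst := fun u hu => (h u hu).1
  have hS : ∀ u ∈ l, Strict (fun p => (f p : ℝ)) u := by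
    intro u hu p hp hpu
    rcases (h u hu).2.1 p (mem_pts.2 hp) with h1 | h1
    · exact absurd (memT_iff.1 h1) hpu
    · rw [← ellZ_cast]
      dsimp only
      exact_mod_cast h1
  apply good_mk
  · intro σ hσ
    obtain ⟨t, ht, rfl⟩ := mem_toT.1 hσ
    refine ⟨triS_sub_of_Lst (hl t ht), t.1, t.2.1, t.2.2, rfl, ?_⟩
    have := triO_of_Lst (hl t ht)
    simp only [triO, ori] at this
    rw [this]; rfl
  · intro x hx
    obtain ⟨t, ht, hmin⟩ := Finset.exists_min_image l.toFinset (fun u => ellR (fun p => (f p : ℝ)) u x)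
      (by rwa [List.toFinset_nonempty_iff])
    rw [List.mem_toFinset] at ht
    have hmin' := fun u hu => hmin u (List.mem_toFinset.2 hu)
    have o := triO_of_Lst (hl t ht)
    obtain ⟨e1, e2, e3⟩ := (h t ht).2.2
    simp only [Set.mem_iUnion]
    refine ⟨triS t, mem_toT.2 ⟨t, ht, rfl⟩, (mem_rhull_triS o).2 ⟨?_, ?_, ?_⟩⟩
    · exact edgeOk_spec o hl (hS t ht) (by simp [triS]) (by simp [triS]) e1 hx hmin'
    · exact edgeOk_spec o hl (hS t ht) (by simp [triS]) (by simp [triS]) e2 hx hmin'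
    · exact edgeOk_spec o hl (hS t ht) (by simp [triS]) (by simp [triS]) e3 hx hmin'
  · intro σ hσ
    obtain ⟨t, ht, rfl⟩ := mem_toT.1 hσ
    exact argmax_of_strict (triO_of_Lst (hl t ht)) (triS_sub_of_Lst (hl t ht)) (hS t ht)

def coms : List Tri :=
  [((0, 0), (1, 0), (2, 1)), ((0, 0), (1, 1), (1, 2)), ((0, 0), (2, 1), (1, 1)),
   ((1, 0), (2, 0), (2, 1)), ((1, 1), (2, 1), (1, 2)), ((1, 2), (2, 1), (4, 0)),
   ((2, 0), (3, 0), (2, 1)), ((2, 1), (3, 0), (4, 0))]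

def reps : List (List Tri × List ℤ) :=
  [([((0, 0), (1, 2), (0, 1)), ((0, 1), (1, 2), (0, 2)), ((0, 2), (1, 2), (0, 3)),
     ((0, 3), (1, 2), (0, 4)), ((0, 4), (1, 2), (1, 3)), ((1, 2), (2, 2), (1, 3)),
     ((1, 2), (3, 1), (2, 2)), ((1, 2), (4, 0), (3, 1))],
     [-1, -5, -11, -19, -35, -3, 0, 0, -28, -7, 0, -23, -12, -21, -20]),
   ([((0, 0), (1, 2), (0, 1)), ((0, 1), (1, 2), (0, 2)), ((0, 2), (1, 2), (0, 3)),
     ((0, 3), (1, 2), (1, 3)), ((0, 3), (1, 3), (0, 4)), ((1, 2), (2, 2), (1, 3)),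
     ((1, 2), (3, 1), (2, 2)), ((1, 2), (4, 0), (3, 1))],
     [-5, -6, -9, -14, -36, -6, 0, 0, -21, -8, 0, -18, -11, -16, -15]),
   ([((0, 0), (1, 2), (0, 1)), ((0, 1), (1, 2), (0, 2)), ((0, 2), (1, 2), (0, 3)),
     ((0, 3), (1, 2), (2, 2)), ((0, 3), (1, 3), (0, 4)), ((0, 3), (2, 2), (1, 3)),
     ((1, 2), (3, 1), (2, 2)), ((1, 2), (4, 0), (3, 1))],
     [-1, -3, -7, -12, -50, -2, 0, 0, -34, -5, 0, -21, -10, -18, -17]),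
   ([((0, 0), (1, 2), (0, 1)), ((0, 1), (1, 2), (0, 2)), ((0, 2), (1, 2), (0, 3)),
     ((0, 3), (1, 2), (3, 1)), ((0, 3), (1, 3), (0, 4)), ((0, 3), (2, 2), (1, 3)),
     ((0, 3), (3, 1), (2, 2)), ((1, 2), (4, 0), (3, 1))],
     [-2, -3, -6, -10, -64, -4, 0, 0, -48, -8, 0, -34, -13, -22, -21]),
   ([((0, 0), (1, 2), (0, 1)), ((0, 1), (1, 2), (0, 2)), ((0, 2), (1, 2), (0, 3)),
     ((0, 3), (1, 2), (4, 0)), ((0, 3), (1, 3), (0, 4)), ((0, 3), (2, 2), (1, 3)),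
     ((0, 3), (3, 1), (2, 2)), ((0, 3), (4, 0), (3, 1))],
     [-2, -3, -5, -8, -71, -4, 0, 0, -56, -9, 0, -42, -15, -32, -23]),
   ([((0, 0), (1, 2), (0, 1)), ((0, 1), (1, 2), (0, 2)), ((0, 2), (1, 2), (1, 3)),
     ((0, 2), (1, 3), (0, 3)), ((0, 3), (1, 3), (0, 4)), ((1, 2), (2, 2), (1, 3)),
     ((1, 2), (3, 1), (2, 2)), ((1, 2), (4, 0), (3, 1))],
     [-1, -3, -9, -38, -68, -2, 0, 0, -27, -5, 0, -22, -10, -18, -17]),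
   ([((0, 0), (1, 2), (0, 1)), ((0, 1), (1, 2), (1, 3)), ((0, 1), (1, 3), (0, 2)),
     ((0, 2), (1, 3), (0, 3)), ((0, 3), (1, 3), (0, 4)), ((1, 2), (2, 2), (1, 3)),
     ((1, 2), (3, 1), (2, 2)), ((1, 2), (4, 0), (3, 1))],
     [-1, -4, -30, -58, -88, -2, 0, 0, -24, -4, 0, -19, -7, -15, -13]),
   ([((0, 0), (1, 2), (1, 3)), ((0, 0), (1, 3), (0, 1)), ((0, 1), (1, 3), (0, 2)),
     ((0, 2), (1, 3), (0, 3)), ((0, 3), (1, 3), (0, 4)), ((1, 2), (2, 2), (1, 3)),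
     ((1, 2), (3, 1), (2, 2)), ((1, 2), (4, 0), (3, 1))],
     [-1, -26, -53, -82, -113, -2, 0, 0, -24, -5, 0, -20, -9, -18, -17])]

def fromL (v : List ℤ) (p : ℤ × ℤ) : ℤ := v.getD ((p.1 * (11 - p.1) / 2 + p.2).toNat) 0

lemma good_reps : ∀ r ∈ reps, Good (toT (coms ++ r.1)) (fun p => (fromL r.2 p : ℝ)) := by
  have : (reps.all fun r => (coms ++ r.1).all fun t => triOk (coms ++ r.1) (fromL r.2) t) = true := by
    decide +kernel
  intro r hr
  exact good_toT (by simp [coms]) (List.all_eq_true.1 this r hr)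

/-! ## The classification of refinements of the motif -/

def mot (x : ℤ × ℤ × ℤ) : List Tri := [cen, t1 x.1, t2 x.2.1, t3 x.2.2]

def Sl : List Tri := mot (0, 0, 4)

lemma motif_iff {T : Finset (Finset (ℤ × ℤ))} {x : ℤ × ℤ × ℤ} :
    Motif T x.1 x.2.1 x.2.2 ↔ ∀ t ∈ mot x, triS t ∈ T := by
  simp only [Motif, mot, List.mem_cons, List.not_mem_nil, or_false, forall_eq_or_imp, forall_eq]

lemma classify {T lam} (h : Good T lam) (hm : ∀ t ∈ Sl, triS t ∈ T) :
    ∃ r ∈ reps, T = toT (coms ++ r.1) := by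
  obtain ⟨rest, h1, h2⟩ := h.srch
    (fun rest => reps.any fun r => rest.all fun t => decide (t ∈ coms ++ r.1))
    [(110, 90), (50, 140)] (by decide) (Lst.filter fun t => _root_.ncr Sl t)
    (fun t ht hT => List.mem_filter.2 ⟨ht, h.ncr hm hT⟩) (by decide +kernel)
  simp only [List.any_eq_true, List.all_eq_true, decide_eq_true_eq] at h2
  obtain ⟨r, hr, h2⟩ := h2
  refine ⟨r, hr, ?_⟩
  have g := good_reps r hr
  have sub : ∀ σ ∈ T, σ ∈ toT (coms ++ r.1) := by
    intro σ hσ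
    obtain ⟨t, ht, rfl⟩ := h.exists_tri hσ
    exact mem_toT.2 ⟨t, h2 t (h1 t ht hσ), rfl⟩
  have i := induces_of_argmax (lam := fun p => (fromL r.2 p : ℝ)) h.1.2.1 (fun σ hσ => h.card hσ)
    (fun σ hσ => ((g.2 σ).1 (sub σ hσ)).2)
  ext σ
  rw [i σ, g.2 σ]

/-! ## The group action -/

lemma bar3_sum (p : ℤ × ℤ) : ∑ k, bar3 p k = 4 := by
  simp [Fin.sum_univ_three, bar3]

lemma bar3_act (π : Equiv.Perm (Fin 3)) (p : ℤ × ℤ) (k : Fin 3) :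
    bar3 (actPt π p) k = bar3 p (π⁻¹ k) := by
  have h := bar3_sum p
  rw [← Equiv.sum_comp π⁻¹, Fin.sum_univ_three] at h
  fin_cases k
  · rfl
  · rfl
  · simp only [actPt]
    change 4 - bar3 p (π⁻¹ 0) - bar3 p (π⁻¹ 1) = bar3 p (π⁻¹ 2)
    linarith

lemma act_mul (σ π : Equiv.Perm (Fin 3)) (p : ℤ × ℤ) :
    actPt σ (actPt π p) = actPt (σ * π) p := by
  conv_lhs => rw [actPt]
  rw [bar3_act, bar3_act, actPt, mul_inv_rev]
  rfl

lemma act_one (p : ℤ × ℤ) : actPt 1 p = p := rfl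

lemma actTri_mul (σ π : Equiv.Perm (Fin 3)) (T : Finset (Finset (ℤ × ℤ))) :
    actTri σ (actTri π T) = actTri (σ * π) T := by
  simp only [actTri, Finset.image_image]
  congr 1
  funext s
  simp only [Function.comp_apply, Finset.image_image]
  congr 1
  funext p
  exact act_mul σ π p

lemma actTri_one (T : Finset (Finset (ℤ × ℤ))) : actTri 1 T = T := by
  have : (fun s : Finset (ℤ × ℤ) => s.image (actPt 1)) = id := by
    funext s
    exact Finset.image_id
  rw [actTri, this, Finset.image_id]

def rw3 : Fin 3 → ℤ × ℤ × ℤ := ![(0, 1, 0), (0, 0, 1), (4, -1, -1)]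

def toA (π : Equiv.Perm (Fin 3)) : Aff := (rw3 (π⁻¹ 0), rw3 (π⁻¹ 1))

lemma bar3_aff (p : ℤ × ℤ) (k : Fin 3) : bar3 p k = aff (rw3 k) p := by
  fin_cases k <;> simp [bar3, aff, rw3] <;> ring

lemma apA_toA (π : Equiv.Perm (Fin 3)) : apA (toA π) = actPt π := by
  funext p
  simp only [apA, toA, actPt, bar3_aff]

lemma mem_lattice_bar3 {p : ℤ × ℤ} : p ∈ latticePts ↔ ∀ k, 0 ≤ bar3 p k := by
  rw [mem_latticePts, Fin.forall_fin_succ, Fin.forall_fin_two]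
  change _ ↔ 0 ≤ p.1 ∧ 0 ≤ p.2 ∧ 0 ≤ 4 - p.1 - p.2
  omega

lemma act_lattice (π : Equiv.Perm (Fin 3)) {p : ℤ × ℤ} (h : p ∈ latticePts) :
    actPt π p ∈ latticePts := by
  rw [mem_lattice_bar3] at *
  intro k
  rw [bar3_act]
  exact h _

lemma isSym_toA (π : Equiv.Perm (Fin 3)) : IsSym (toA π) (toA π⁻¹) where
  h1 p := by rw [apA_toA, apA_toA, act_mul, mul_inv_cancel, act_one]
  h2 p := by rw [apA_toA, apA_toA, act_mul, inv_mul_cancel, act_one]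
  h3 p h := by rw [apA_toA]; exact act_lattice π h
  h4 p h := by rw [apA_toA]; exact act_lattice _ h
  h5 := by revert π; decide +kernel

lemma Good.act {T lam} (h : Good T lam) (π : Equiv.Perm (Fin 3)) :
    ∃ lam', Good (actTri π T) lam' := by
  have := h.map (isSym_toA π) (by simpa using isSym_toA π⁻¹)
  rw [actA, apA_toA] at this
  exact ⟨_, this⟩

def mapT (π : Equiv.Perm (Fin 3)) (t : Tri) : Tri := (actPt π t.1, actPt π t.2.1, actPt π t.2.2)

lemma triS_mapT (π : Equiv.Perm (Fin 3)) (t : Tri) :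
    triS (mapT π t) = (triS t).image (actPt π) := by
  simp [triS, mapT, Finset.image_insert]

lemma mapT_mem {T : Finset (Finset (ℤ × ℤ))} {t : Tri} (π : Equiv.Perm (Fin 3))
    (h : triS t ∈ T) : triS (mapT π t) ∈ actTri π T := by
  rw [triS_mapT]
  exact Finset.mem_image_of_mem _ h

lemma motif_orbit {T : Finset (Finset (ℤ × ℤ))} :
    (∃ x ∈ six, Motif T x.1 x.2.1 x.2.2) ↔
      ∃ π : Equiv.Perm (Fin 3), ∀ t ∈ Sl, triS t ∈ actTri π T := by
  constructor
  · rintro ⟨x, hx, hm⟩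
    rw [motif_iff] at hm
    have key : ∀ x ∈ six, ∃ π : Equiv.Perm (Fin 3), ∀ s ∈ Sl, ∃ t ∈ mot x,
        triS (mapT π t) = triS s := by decide +kernel
    obtain ⟨π, hπ⟩ := key x hx
    refine ⟨π, fun s hs => ?_⟩
    obtain ⟨t, ht, e⟩ := hπ s hs
    rw [← e]
    exact mapT_mem π (hm t ht)
  · rintro ⟨π, hπ⟩
    have key : ∀ π : Equiv.Perm (Fin 3), ∃ x ∈ six, ∀ s ∈ mot x, ∃ t ∈ Sl,
        triS (mapT π⁻¹ t) = triS s := by decide +kernel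
    obtain ⟨x, hx, h⟩ := key π
    refine ⟨x, hx, motif_iff.2 fun s hs => ?_⟩
    obtain ⟨t, ht, e⟩ := h s hs
    rw [← e, ← actTri_one T, ← inv_mul_cancel π, ← actTri_mul]
    exact mapT_mem _ (hπ t ht)

/-! ## Refinement -/

lemma refines_iff {T lam} (h : Good T lam) :
    Refines T (toT Sl) ↔ ∀ t ∈ Sl, triS t ∈ T := by
  constructor
  · intro hr t ht
    have o : triO t = 1 := by revert t; decide
    have h1 := hr (triS t) (mem_toT.2 ⟨t, ht, rfl⟩)
    have hv : ∀ σ : Finset (ℤ × ℤ), ∀ p ∈ σ, toR p ∈ rhull σ := fun σ p hp =>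
      subset_convexHull ℝ _ ⟨p, hp, rfl⟩
    have hne : toR t.1 ∈ rhull (triS t) := hv _ _ (by simp [triS])
    rw [h1] at hne
    simp only [Set.mem_iUnion] at hne
    obtain ⟨σ, hσ, hsub, -⟩ := hne
    have hs : σ ⊆ triS t := by
      intro p hp
      have h2 := (mem_rhull_triS o).1 (hsub (hv σ p hp))
      have hl : p ∈ pts := mem_pts.2 ((h.1.1 σ hσ).1 hp)
      have cv : ∀ a b : ℤ × ℤ, 0 ≤ oriR a b (toR p) → 0 ≤ ori a b p := by
        intro a b hab
        have e : oriR a b (toR p) = ((ori a b p : ℤ) : ℝ) := by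
          simp only [oriR, ori, toR]; push_cast; ring
        rw [e] at hab
        exact_mod_cast hab
      have key : ∀ t ∈ Sl, ∀ p ∈ pts, 0 ≤ ori t.1 t.2.1 p → 0 ≤ ori t.2.1 t.2.2 p →
          0 ≤ ori t.2.2 t.1 p → p ∈ triS t := by decide +kernel
      exact key t ht p hl (cv _ _ h2.1) (cv _ _ h2.2.1) (cv _ _ h2.2.2)
    have : σ = triS t := Finset.eq_of_subset_of_card_le hs (by rw [h.card hσ, card_triS o])
    rwa [← this]
  · intro hm c hc
    obtain ⟨t, ht, rfl⟩ := mem_toT.1 hc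
    apply Set.Subset.antisymm
    · intro x hx
      simp only [Set.mem_iUnion]
      exact ⟨triS t, hm t ht, le_rfl, hx⟩
    · exact Set.iUnion₂_subset fun σ hσ => Set.iUnion_subset fun hs => hs

lemma reps_Sl {r : List Tri × List ℤ} : ∀ t ∈ Sl, triS t ∈ toT (coms ++ r.1) := by
  intro t ht
  have key : ∀ t ∈ Sl, ∃ u ∈ coms, triS u = triS t := by decide +kernel
  obtain ⟨u, hu, e⟩ := key t ht
  exact mem_toT.2 ⟨u, List.mem_append_left _ hu, e⟩

lemma partial_Sl : IsPartialSubdivision (toT Sl) := by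
  obtain ⟨r, hr⟩ : ∃ r, r ∈ reps := ⟨_, List.mem_cons_self⟩
  have g := good_reps r hr
  have sub : ∀ c ∈ toT Sl, c ∈ toT (coms ++ r.1) := by
    intro c hc
    obtain ⟨t, ht, rfl⟩ := mem_toT.1 hc
    exact reps_Sl t ht
  refine ⟨fun c hc => ⟨(g.1.1 c (sub c hc)).1, ?_⟩, fun c hc d hd => g.1.2.2 c (sub c hc) d (sub d hd)⟩
  rw [Finset.coe_nonempty, ← Finset.card_pos, g.card (sub c hc)]
  norm_num

def repF : Finset (Finset (Finset (ℤ × ℤ))) := (reps.map fun r => toT (coms ++ r.1)).toFinset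

lemma mem_repF {T : Finset (Finset (ℤ × ℤ))} : T ∈ repF ↔ ∃ r ∈ reps, T = toT (coms ++ r.1) := by
  simp [repF, eq_comm]

lemma card_repF : repF.card = 8 := by decide +kernel

lemma rigid {T lam} (h : Good T lam) (hm : ∀ t ∈ Sl, triS t ∈ T) {π : Equiv.Perm (Fin 3)}
    (hp : ∀ t ∈ Sl, triS t ∈ actTri π T) : π = 1 := by
  by_contra hne
  have key : ∀ π : Equiv.Perm (Fin 3), π ≠ 1 → ∃ t ∈ Sl, ∃ u ∈ Sl,
      crossT (mapT π t) u = true := by decide +kernel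
  obtain ⟨t, ht, u, hu, hc⟩ := key π hne
  obtain ⟨lam', h'⟩ := h.act π
  have := h'.not_crossT (mapT_mem π (hm t ht)) (hp u hu)
  rw [this] at hc
  exact absurd hc (by decide)

lemma nongen_good {T : Finset (Finset (ℤ × ℤ))} (h : NonGenericTriangulation T) :
    ∃ lam, Good T lam ∧ ∃ π : Equiv.Perm (Fin 3), ∀ t ∈ Sl, triS t ∈ actTri π T := by
  obtain ⟨⟨h1, lam, h2⟩, h3⟩ := h
  exact ⟨lam, ⟨h1, h2⟩, motif_orbit.1 ((nongeneric_iff ⟨h1, h2⟩).1 h3)⟩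

theorem main_result :
    (∃ reps : Finset (Finset (Finset (ℤ × ℤ))),
      (∀ T ∈ reps, NonGenericTriangulation T) ∧
      (∀ T, NonGenericTriangulation T → ∃! T', T' ∈ reps ∧ S3Equiv T T') ∧
      reps.card = 8) ∧
    (∃ S : Finset (Finset (ℤ × ℤ)), IsPartialSubdivision S ∧
      ∀ T, IsRegularUnimodularTriangulation T →
        ((∀ lam, Induces lam T → ¬ SatisfiesGenericityI lam) ↔
          ∃ π : Equiv.Perm (Fin 3), Refines (actTri π T) S)) := by
  constructor
  · refine ⟨repF, ?_, ?_, card_repF⟩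
    · intro T hT
      obtain ⟨r, hr, rfl⟩ := mem_repF.1 hT
      have g := good_reps r hr
      refine ⟨⟨g.1, _, g.2⟩, (nongeneric_iff g).2 (motif_orbit.2 ⟨1, ?_⟩)⟩
      rw [actTri_one]
      exact reps_Sl
    · intro T hT
      obtain ⟨lam, g, π, hπ⟩ := nongen_good hT
      obtain ⟨lam', g'⟩ := g.act π
      refine ⟨actTri π T, ⟨mem_repF.2 (classify g' hπ), π, rfl⟩, ?_⟩
      rintro U ⟨hU, σ, rfl⟩
      have hσ : ∀ t ∈ Sl, triS t ∈ actTri σ T := by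
        obtain ⟨r, hr, e⟩ := mem_repF.1 hU
        rw [e]
        exact reps_Sl
      have e : actTri σ T = actTri (σ * π⁻¹) (actTri π T) := by
        rw [actTri_mul, inv_mul_cancel_right]
      rw [e] at hσ ⊢
      rw [rigid g' hπ hσ, actTri_one]
  · refine ⟨toT Sl, partial_Sl, ?_⟩
    rintro T ⟨h1, lam, h2⟩
    have g : Good T lam := ⟨h1, h2⟩
    rw [nongeneric_iff g, motif_orbit]
    refine exists_congr fun π => ?_
    obtain ⟨lam', g'⟩ := g.act π
    exact (refines_iff g').symm

/-- **Proposition (discussion around Figure 6).**  Up to the `S₃`-action on `4Δ₂`, there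
are exactly 8 regular unimodular triangulations `𝒯` of `4Δ₂` with the property that no
smooth tropical quartic curve dual to `𝒯` satisfies genericity condition (i) (the
*non-generic* triangulations); and these are exactly the unimodular refinements of a
single common partial subdivision of `4Δ₂`. -/
theorem nongeneric_triangulations_count_and_motif :
    (∃ reps : Finset (Finset (Finset (ℤ × ℤ))),
      (∀ T ∈ reps, NonGenericTriangulation T) ∧
      (∀ T, NonGenericTriangulation T → ∃! T', T' ∈ reps ∧ S3Equiv T T') ∧
      reps.card = 8) ∧
    (∃ S : Finset (Finset (ℤ × ℤ)), IsPartialSubdivision S ∧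
      ∀ T, IsRegularUnimodularTriangulation T →
        ((∀ lam, Induces lam T → ¬ SatisfiesGenericityI lam) ↔
          ∃ π : Equiv.Perm (Fin 3), Refines (actTri π T) S)) := by
  exact main_result
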